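/- arXiv:math/0309201 — 3 statements merged into one kernel-verified Lean document; each statement's English description precedes it below -/
import Mathlib

section
/- For |q|<1, the identity 1 - 5·∑_{n≥1} (n/5)·n·q^n/(1-q^n) = (q;q)_∞^5/(q^5;q^5)_∞ holds, where (n/5) is the Legendre symbol mod 5 and (a;q)_∞ = ∏_{k≥0}(1-a q^k). -/
open scoped BigOperators

instance : Fact (Nat.Prime 5) := ⟨by norm_num⟩

open Filter Topology Set

/-- The infinite product `(x; q)_∞`. -/
noncomputable def qPoch (q x : ℂ) : ℂ := ∏' n : ℕ, (1 - x * q ^ n)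

/-- The modified theta function `(x; q)_∞ (q / x; q)_∞`. -/
noncomputable def qTheta (q x : ℂ) : ℂ := qPoch q x * qPoch q (q / x)

/-- The function `x / (1 - x)²`, whose `q`-periodization is essentially the Weierstrass function. -/
noncomputable def poleTerm (x : ℂ) : ℂ := x / (1 - x) ^ 2

/-- The sum of `poleTerm (x qⁿ)` over `n ≥ 1`. -/
noncomputable def poleSum (q x : ℂ) : ℂ := ∑' n : ℕ, poleTerm (x * q ^ (n + 1))

/-- The multiplicative Weierstrass function: the sum of `poleTerm (x qⁿ)` over all integers `n`. -/
noncomputable def qWeierstrass (q x : ℂ) : ℂ := poleTerm x + poleSum q x + poleSum q x⁻¹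

/-- The annulus `‖q‖ < ‖a‖ < ‖q‖⁻¹`. -/
def qAnnulus (q : ℂ) : Set ℂ := {a | ‖q‖ < ‖a‖ ∧ ‖q‖ * ‖a‖ < 1}

section Basic

variable {q : ℂ} (hq : ‖q‖ < 1)

include hq

lemma summable_norm_mul_pow (x : ℂ) : Summable fun n : ℕ ↦ ‖-(x * q ^ n)‖ := by
  simpa using (summable_geometric_of_lt_one (norm_nonneg q) hq).mul_left ‖x‖

lemma multipliable_one_sub_mul_pow (x : ℂ) : Multipliable fun n : ℕ ↦ (1 - x * q ^ n) := by
  simpa [sub_eq_add_neg] using multipliable_one_add_of_summable (summable_norm_mul_pow hq x)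

lemma qPoch_eq (x : ℂ) : qPoch q x = (1 - x) * qPoch q (q * x) := by
  have hshift : (fun n : ℕ ↦ 1 - x * q ^ (n + 1)) = fun n ↦ 1 - q * x * q ^ n :=
    funext fun n ↦ by ring
  have h : Multipliable fun n : ℕ ↦ 1 - x * q ^ (n + 1) :=
    hshift ▸ multipliable_one_sub_mul_pow hq (q * x)
  have h' := tprod_eq_zero_mul' (f := fun n : ℕ ↦ 1 - x * q ^ n) h
  rw [hshift] at h'
  simpa only [qPoch, pow_zero, mul_one] using h'

lemma qPoch_ne_zero {x : ℂ} (hx : ‖x‖ < 1) : qPoch q x ≠ 0 := by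
  have h : ∀ n : ℕ, 1 + -(x * q ^ n) ≠ 0 := fun n h ↦ by
    have h1 : ‖x * q ^ n‖ < 1 := by
      rw [norm_mul, norm_pow]
      exact (mul_le_of_le_one_right (norm_nonneg x)
        (pow_le_one₀ (norm_nonneg q) hq.le)).trans_lt hx
    rw [← sub_eq_add_neg, sub_eq_zero] at h
    simp [← h] at h1
  simpa [qPoch, sub_eq_add_neg] using
    tprod_one_add_ne_zero_of_summable h (summable_norm_mul_pow hq x)

lemma differentiable_qPoch : Differentiable ℂ (qPoch q) := by
  have key : HasProdLocallyUniformlyOn (fun (n : ℕ) x ↦ 1 + -(x * q ^ n))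
      (fun x ↦ ∏' n : ℕ, (1 + -(x * q ^ n))) (univ : Set ℂ) := by
    apply hasProdLocallyUniformlyOn_of_forall_compact isOpen_univ
    intro K _ hK
    obtain ⟨C, hC⟩ := hK.isBounded.exists_norm_le
    refine ((summable_geometric_of_lt_one (norm_nonneg q) hq).mul_left C
      ).hasProdUniformlyOn_nat_one_add hK (.of_forall fun n x hx ↦ ?_) fun _ ↦ by fun_prop
    rw [norm_neg, norm_mul, norm_pow]
    gcongr
    exact hC x hx
  have := key.differentiableOn
    (.of_forall fun _ ↦ by simpa [Finset.prod_fn] using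
      DifferentiableOn.finsetProd (fun _ _ ↦ by fun_prop)) isOpen_univ
  rw [differentiableOn_univ] at this
  simpa only [qPoch, sub_eq_add_neg] using! this

lemma summable_poleTerm (x : ℂ) : Summable fun n : ℕ ↦ poleTerm (x * q ^ n) := by
  refine .of_norm_bounded_eventually_nat
    ((summable_geometric_of_lt_one (norm_nonneg q) hq).mul_left (‖x‖ * 4)) ?_
  have ht : Tendsto (fun n : ℕ ↦ ‖x * q ^ n‖) atTop (𝓝 0) := by
    simpa using (tendsto_pow_atTop_nhds_zero_of_lt_one (norm_nonneg q) hq).const_mul ‖x‖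
  filter_upwards [ht.eventually_lt_const (show (0 : ℝ) < 1 / 2 by norm_num)] with n hn
  have h1 : 1 / 2 ≤ ‖1 - x * q ^ n‖ := by
    have := norm_sub_norm_le 1 (x * q ^ n)
    rw [norm_one] at this
    linarith
  rw [poleTerm, norm_div, norm_pow, div_le_iff₀ (by positivity), norm_mul, norm_pow]
  have h2 : 1 ≤ 4 * ‖1 - x * q ^ n‖ ^ 2 := by nlinarith
  nlinarith [mul_nonneg (norm_nonneg x) (pow_nonneg (norm_nonneg q) n)]

lemma poleSum_eq (x : ℂ) : poleSum q x = poleTerm (q * x) + poleSum q (q * x) := by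
  have h := (summable_poleTerm hq (q * x)).congr
    (g := fun n ↦ poleTerm (x * q ^ (n + 1))) fun n ↦ by congr 1; ring
  rw [poleSum, h.tsum_eq_zero_add, poleSum]
  congr 1
  · congr 1; ring
  · congr 1; ext n; congr 1; ring

lemma differentiableOn_poleSum : DifferentiableOn ℂ (poleSum q) {x | ‖q‖ * ‖x‖ < 1} := by
  have hopen (r : ℝ) : IsOpen {x : ℂ | ‖q‖ * ‖x‖ < r} :=
    isOpen_lt (by fun_prop) continuous_const
  intro x hx
  obtain ⟨r, hxr, hr⟩ := exists_between (show ‖q‖ * ‖x‖ < 1 from hx)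
  have hb (n : ℕ) (y : ℂ) (hy : ‖q‖ * ‖y‖ < r) :
      ‖y * q ^ (n + 1)‖ ≤ r * ‖q‖ ^ n ∧ 1 - r ≤ ‖1 - y * q ^ (n + 1)‖ := by
    have h1 : ‖y * q ^ (n + 1)‖ ≤ r * ‖q‖ ^ n := by
      rw [norm_mul, norm_pow, pow_succ', ← mul_assoc, mul_comm ‖y‖]
      gcongr
    refine ⟨h1, ?_⟩
    have h2 := norm_sub_norm_le 1 (y * q ^ (n + 1))
    rw [norm_one] at h2
    have h3 : r * ‖q‖ ^ n ≤ r := mul_le_of_le_one_right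
      ((by positivity : 0 ≤ ‖q‖ * ‖y‖).trans hy.le) (pow_le_one₀ (norm_nonneg q) hq.le)
    linarith
  have h : DifferentiableOn ℂ (poleSum q) {x | ‖q‖ * ‖x‖ < r} := by
    refine Complex.differentiableOn_tsum_of_summable_norm
      (u := fun n ↦ r / (1 - r) ^ 2 * ‖q‖ ^ n)
      ((summable_geometric_of_lt_one (norm_nonneg q) hq).mul_left _) (fun n ↦ ?_) (hopen r)
      fun n y hy ↦ ?_
    · refine DifferentiableOn.div (by fun_prop) (by fun_prop) fun y hy ↦ pow_ne_zero 2 ?_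
      rw [← norm_pos_iff]
      linarith [(hb n y hy).2]
    · obtain ⟨h1, h2⟩ := hb n y hy
      have : 0 < 1 - r := by linarith
      rw [poleTerm, norm_div, norm_pow, div_mul_eq_mul_div]
      gcongr
      exact (norm_nonneg _).trans h1
  exact (h.differentiableAt ((hopen r).mem_nhds hxr)).differentiableWithinAt

end Basic

lemma poleTerm_inv (x : ℂ) : poleTerm x⁻¹ = poleTerm x := by
  rcases eq_or_ne x 0 with rfl | hx
  · simp
  rcases eq_or_ne x 1 with rfl | h1
  · simp
  have h2 : 1 - x ≠ 0 := sub_ne_zero.2 h1.symm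
  have h3 : 1 - x⁻¹ = -(1 - x) / x := by field_simp; ring
  rw [poleTerm, poleTerm, h3]
  field_simp

section Theta

variable {q : ℂ} (hq : ‖q‖ < 1)

include hq

lemma qWeierstrass_mul (hq0 : q ≠ 0) (x : ℂ) : qWeierstrass q (q * x) = qWeierstrass q x := by
  have h := poleSum_eq hq (q * x)⁻¹
  have h' : q * (q * x)⁻¹ = x⁻¹ := by
    rw [mul_inv, mul_inv_cancel_left₀ hq0]
  rw [h', poleTerm_inv] at h
  rw [qWeierstrass, qWeierstrass, h, poleSum_eq hq x]
  ring

lemma qTheta_mul (hq0 : q ≠ 0) {x : ℂ} (hx : x ≠ 0) : qTheta q (q * x) = -x⁻¹ * qTheta q x := by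
  have h1 : q / (q * x) = x⁻¹ := by field_simp
  rw [qTheta, qTheta, h1, qPoch_eq hq x, qPoch_eq hq x⁻¹, ← div_eq_mul_inv]
  field_simp
  ring

lemma qTheta_eq (x : ℂ) : qTheta q x = (1 - x) * (qPoch q (q * x) * qPoch q (q / x)) := by
  rw [qTheta, qPoch_eq hq x, mul_assoc]

lemma qTheta_inv {x : ℂ} (hx : x ≠ 0) : qTheta q x⁻¹ = -x⁻¹ * qTheta q x := by
  rw [qTheta_eq hq, qTheta_eq hq, ← div_eq_mul_inv, div_inv_eq_mul]
  field_simp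
  ring

end Theta

lemma isOpen_qAnnulus (q : ℂ) : IsOpen (qAnnulus q) :=
  (isOpen_lt continuous_const continuous_norm).inter
    (isOpen_lt (continuous_norm.const_mul _) continuous_const)

lemma ne_zero_of_mem_qAnnulus {q a : ℂ} (ha : a ∈ qAnnulus q) : a ≠ 0 :=
  norm_pos_iff.1 ((norm_nonneg q).trans_lt ha.1)

lemma inv_mem_qAnnulus {q a : ℂ} (ha : a ∈ qAnnulus q) : a⁻¹ ∈ qAnnulus q := by
  have h0 := norm_pos_iff.2 (ne_zero_of_mem_qAnnulus ha)
  obtain ⟨h1, h2⟩ := ha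
  refine ⟨?_, ?_⟩
  · rwa [norm_inv, ← one_div, lt_div_iff₀ h0]
  · rw [norm_inv, ← div_eq_mul_inv, div_lt_one h0]
    exact h1

lemma isPreconnected_qAnnulus {q : ℂ} (hq0 : q ≠ 0) : IsPreconnected (qAnnulus q) := by
  have hq0' := norm_pos_iff.2 hq0
  have h : qAnnulus q = Complex.exp '' (Complex.re ⁻¹' Ioo (Real.log ‖q‖) (-Real.log ‖q‖)) := by
    ext a
    constructor
    · intro ha
      have h0 := norm_pos_iff.2 (ne_zero_of_mem_qAnnulus ha)
      refine ⟨Complex.log a, ⟨?_, ?_⟩, Complex.exp_log (ne_zero_of_mem_qAnnulus ha)⟩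
      · rw [Complex.log_re]
        exact Real.log_lt_log hq0' ha.1
      · rw [Complex.log_re, lt_neg_iff_add_neg, add_comm, ← Real.log_mul hq0'.ne' h0.ne']
        exact Real.log_neg (by positivity) ha.2
    · rintro ⟨z, ⟨h1, h2⟩, rfl⟩
      refine ⟨?_, ?_⟩
      · rw [Complex.norm_exp, ← Real.log_lt_iff_lt_exp hq0']
        exact h1
      · rw [Complex.norm_exp]
        nth_rewrite 1 [← Real.exp_log hq0']
        rw [← Real.exp_add, Real.exp_lt_one_iff]
        linarith
  rw [h]
  exact (((convex_Ioo _ _).linear_preimage Complex.reLm).isPreconnected).image _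
    Complex.continuous_exp.continuousOn

/-- A holomorphic function on the annulus `‖q‖ < ‖a‖ < ‖q‖⁻¹` that is invariant under
multiplication by `q` is constant. -/
lemma eqOn_of_qPeriodic {q : ℂ} (hq : ‖q‖ < 1) (hq0 : q ≠ 0) {F : ℂ → ℂ}
    (hF : DifferentiableOn ℂ F (qAnnulus q))
    (hper : ∀ a ∈ qAnnulus q, 1 < ‖a‖ → F (q * a) = F a) {a b : ℂ}
    (ha : a ∈ qAnnulus q) (hb : b ∈ qAnnulus q) : F a = F b := by
  have hq0' := norm_pos_iff.2 hq0
  obtain ⟨r, hr0, hr⟩ : ∃ r : ℝ, 0 < r ∧ r ^ 2 = ‖q‖ :=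
    ⟨√‖q‖, Real.sqrt_pos.2 hq0', Real.sq_sqrt hq0'.le⟩
  have hr1 : r < 1 := by nlinarith
  set K : Set ℂ := {a | r ≤ ‖a‖ ∧ r * ‖a‖ ≤ 1} with hK
  have hKA : K ⊆ qAnnulus q := fun a ha ↦ by
    have h1 : r ≤ ‖a‖ := ha.1
    have h2 : r * ‖a‖ ≤ 1 := ha.2
    exact ⟨by nlinarith, by rw [← hr]; nlinarith⟩
  have hKc : IsCompact K := by
    refine Metric.isCompact_of_isClosed_isBounded
      ((isClosed_le continuous_const continuous_norm).inter
        (isClosed_le (continuous_norm.const_mul _) continuous_const)) ?_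
    refine (Metric.isBounded_closedBall (x := (0 : ℂ)) (r := r⁻¹)).subset fun a ha ↦ ?_
    rw [mem_closedBall_zero_iff, ← one_div, le_div_iff₀' hr0]
    exact ha.2
  obtain ⟨c, hc, hmax⟩ := hKc.exists_isMaxOn (f := fun a ↦ ‖F a‖)
    ⟨1, by simpa using hr1.le, by simpa using hr1.le⟩ (hF.continuousOn.mono hKA).norm
  have hmax' : IsMaxOn (norm ∘ F) (qAnnulus q) c := by
    intro x hx
    have h1 := hx.1
    have h2 := hx.2
    rw [← hr] at h1 h2
    rcases lt_or_ge ‖x‖ r with h | h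
    · have hx0 : x ≠ 0 := ne_zero_of_mem_qAnnulus hx
      have hy : ‖q⁻¹ * x‖ * r ^ 2 = ‖x‖ := by
        rw [norm_mul, norm_inv, hr]; field_simp
      have hy1 : 1 < ‖q⁻¹ * x‖ := by nlinarith [norm_nonneg (q⁻¹ * x)]
      have hy2 : r * ‖q⁻¹ * x‖ ≤ 1 := by nlinarith
      have hyK : q⁻¹ * x ∈ K := ⟨by linarith, hy2⟩
      have := hper _ (hKA hyK) hy1
      rw [mul_inv_cancel_left₀ hq0] at this
      simpa [this] using hmax hyK
    · rcases le_or_gt (r * ‖x‖) 1 with h' | h'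
      · exact hmax ⟨h, h'⟩
      · have hy : ‖q * x‖ = r ^ 2 * ‖x‖ := by rw [norm_mul, hr]
        have hyK : q * x ∈ K := ⟨by rw [hy]; nlinarith, by rw [hy]; nlinarith⟩
        have := hper x hx (by nlinarith)
        simpa [this] using hmax hyK
  have h := Complex.eqOn_of_isPreconnected_of_isMaxOn_norm (isPreconnected_qAnnulus hq0)
    (isOpen_qAnnulus q) hF (hKA hc) hmax'
  exact (h ha).trans (h hb).symm

/-- The difference of two values of the Weierstrass function as a theta quotient, for values of the
variables on the unit circle. -/
theorem qWeierstrass_sub_qWeierstrass {q : ℂ} (hq : ‖q‖ < 1) (hq0 : q ≠ 0) {a b : ℂ}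
    (ha : ‖a‖ = 1) (ha1 : a ≠ 1) (hb : ‖b‖ = 1) (hb1 : b ≠ 1) :
    qWeierstrass q a - qWeierstrass q b = qPoch q q ^ 4 / (qTheta q b * qTheta q b⁻¹) *
      (qTheta q (a * b) * qTheta q (a / b) / qTheta q a ^ 2) := by
  have hb0 : b ≠ 0 := by rintro rfl; simp at hb
  have mem_unit {x : ℂ} (hx : ‖x‖ = 1) : x ∈ qAnnulus q := by simp [qAnnulus, hx, hq]
  set C := qPoch q q ^ 4 / (qTheta q b * qTheta q b⁻¹) with hC
  let G : ℂ → ℂ := fun x ↦ qTheta q (x * b) * qTheta q (x / b)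
  let T : ℂ → ℂ := fun x ↦ qPoch q (q * x) * qPoch q (q / x)
  let N : ℂ → ℂ := fun x ↦ 1 - C * (G x / (x * T x ^ 2))
  have hT {x : ℂ} (hx : x ∈ qAnnulus q) : T x ≠ 0 := by
    refine mul_ne_zero (qPoch_ne_zero hq ?_) (qPoch_ne_zero hq ?_)
    · rw [norm_mul]; exact hx.2
    · rw [norm_div, div_lt_one (norm_pos_iff.2 (ne_zero_of_mem_qAnnulus hx))]; exact hx.1
  have hθ {x : ℂ} (hx : x ∈ qAnnulus q) (hx1 : x ≠ 1) : qTheta q x ≠ 0 := by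
    rw [qTheta_eq hq]
    exact mul_ne_zero (sub_ne_zero.2 hx1.symm) (hT hx)
  have hdP := differentiable_qPoch hq
  have hN : DifferentiableOn ℂ N (qAnnulus q) := by
    intro x hx
    have hx0 := ne_zero_of_mem_qAnnulus hx
    have hden : x * T x ^ 2 ≠ 0 := mul_ne_zero hx0 (pow_ne_zero 2 (hT hx))
    have hdT : DifferentiableAt ℂ T x := by
      refine .mul (hdP.differentiableAt.comp x (by fun_prop))
        (hdP.differentiableAt.comp x (by fun_prop (disch := assumption)))
    have hdG : DifferentiableAt ℂ G x := by
      refine .mul (.mul ?_ ?_) (.mul ?_ ?_) <;>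
      refine hdP.differentiableAt.comp x ?_
      · fun_prop
      · exact .div (by fun_prop) (by fun_prop) (mul_ne_zero hx0 hb0)
      · fun_prop
      · exact .div (by fun_prop) (by fun_prop) (div_ne_zero hx0 hb0)
    exact (DifferentiableAt.const_sub ((hdG.div (differentiableAt_id.mul (hdT.pow 2)) hden
      ).const_mul C) 1).differentiableWithinAt
  have h1A : qAnnulus q ∈ 𝓝 (1 : ℂ) := (isOpen_qAnnulus q).mem_nhds (mem_unit norm_one)
  have hNinv {x : ℂ} (hx : x ≠ 0) : N x⁻¹ = N x := by
    have h1 : x⁻¹ * b = (x / b)⁻¹ := by field_simp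
    have h2 : x⁻¹ / b = (x * b)⁻¹ := by field_simp
    have h3 : T x⁻¹ = T x := by
      simp only [T]
      rw [← div_eq_mul_inv, div_inv_eq_mul, mul_comm]
    simp only [N, G]
    rw [h3, h1, h2, qTheta_inv hq (div_ne_zero hx hb0), qTheta_inv hq (mul_ne_zero hx hb0)]
    congr 2
    rcases eq_or_ne (T x) 0 with h | h
    · simp [h]
    · field_simp
  have hN1 : N 1 = 0 := by
    have h1 := hθ (mem_unit hb) hb1
    have h2 : qTheta q b⁻¹ ≠ 0 :=
      hθ (mem_unit (by simp [hb])) (by simpa using hb1)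
    have h3 := qPoch_ne_zero hq hq
    simp only [N, G, T, hC, one_mul, mul_one, div_one, one_div]
    rw [sub_eq_zero, eq_comm, div_mul_div_comm, div_eq_one_iff_eq
      (mul_ne_zero (mul_ne_zero h1 h2) (pow_ne_zero 2 (mul_ne_zero h3 h3)))]
    ring
  have hN1' : deriv N 1 = 0 := by
    have hd : HasDerivAt N (deriv N 1) 1 := (hN.differentiableAt h1A).hasDerivAt
    have hi : HasDerivAt (fun x : ℂ ↦ x⁻¹) (-1) 1 := by
      simpa using hasDerivAt_inv (one_ne_zero (α := ℂ))
    have hc : HasDerivAt (fun x ↦ N x⁻¹) (deriv N 1 * -1) 1 :=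
      HasDerivAt.comp (h₂ := N) 1 (by simpa using hd) hi
    have he : (fun x ↦ N x⁻¹) =ᶠ[𝓝 1] N :=
      (eventually_ne_nhds one_ne_zero).mono fun x hx ↦ hNinv hx
    have := (hc.congr_of_eventuallyEq he.symm).unique hd
    linear_combination (-1 / 2 : ℂ) * this
  let E : ℂ → ℂ := fun x ↦ qWeierstrass q x - qWeierstrass q b - C * (G x / qTheta q x ^ 2)
  let F : ℂ → ℂ := fun x ↦
    poleSum q x + poleSum q x⁻¹ - qWeierstrass q b + x * dslope (dslope N 1) 1 x
  have hF : DifferentiableOn ℂ F (qAnnulus q) := by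
    have h1 : DifferentiableOn ℂ (fun x ↦ poleSum q x⁻¹) (qAnnulus q) :=
      (differentiableOn_poleSum hq).comp
        (fun x hx ↦ (differentiableAt_inv (ne_zero_of_mem_qAnnulus hx)).differentiableWithinAt)
        fun x hx ↦ (inv_mem_qAnnulus hx).2
    have h2 := (Complex.differentiableOn_dslope h1A).2 ((Complex.differentiableOn_dslope h1A).2 hN)
    exact ((((differentiableOn_poleSum hq).mono fun x hx ↦ hx.2).add h1).sub_const _).add
      (differentiableOn_id.mul h2)
  have hEF {x : ℂ} (hx : x ∈ qAnnulus q) (hx1 : x ≠ 1) : F x = E x := by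
    have h1 := ne_zero_of_mem_qAnnulus hx
    have h2 := hT hx
    have h3 : 1 - x ≠ 0 := sub_ne_zero.2 hx1.symm
    have h4 : x - 1 ≠ 0 := sub_ne_zero.2 hx1
    have h5 : dslope (dslope N 1) 1 x = N x / (1 - x) ^ 2 := by
      rw [dslope_of_ne _ hx1, slope_def_field, dslope_same, hN1', dslope_of_ne _ hx1,
        slope_def_field, hN1]
      rw [show (1 - x) ^ 2 = (x - 1) * (x - 1) by ring]
      field_simp
      ring
    have h6 : qTheta q x = (1 - x) * T x := qTheta_eq hq x
    simp only [F, E, h5, h6, qWeierstrass, N, poleTerm]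
    field_simp
    ring
  have hper (x : ℂ) (hx : x ∈ qAnnulus q) (hx1 : 1 < ‖x‖) : F (q * x) = F x := by
    have h1 := ne_zero_of_mem_qAnnulus hx
    have hqx : q * x ∈ qAnnulus q := by
      refine ⟨?_, ?_⟩
      · rw [norm_mul]; exact lt_mul_of_one_lt_right (norm_pos_iff.2 hq0) hx1
      · rw [norm_mul]
        nlinarith [hx.2, norm_nonneg q, mul_nonneg (norm_nonneg q) (norm_nonneg x)]
    have hne : x ≠ 1 := by rintro rfl; simp at hx1
    have hne' : q * x ≠ 1 := by
      intro h
      have := hx.2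
      rw [← norm_mul, h] at this
      simp at this
    have h2 := hθ hx hne
    rw [hEF hqx hne', hEF hx hne]
    simp only [E, G]
    rw [qWeierstrass_mul hq hq0, qTheta_mul hq hq0 h1, mul_assoc q x b, mul_div_assoc q x b,
      qTheta_mul hq hq0 (mul_ne_zero h1 hb0), qTheta_mul hq hq0 (div_ne_zero h1 hb0)]
    field_simp
  have h := eqOn_of_qPeriodic hq hq0 hF hper (mem_unit ha) (mem_unit hb)
  rw [hEF (mem_unit ha) ha1, hEF (mem_unit hb) hb1] at h
  have hθ1 : qTheta q 1 = 0 := by simp [qTheta_eq hq]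
  simp only [E, G, div_self hb0, hθ1, mul_zero, zero_div, sub_self] at h
  exact sub_eq_zero.1 h

lemma hasSum_poleSum {q z : ℂ} (hq : ‖q‖ < 1) (hz : ‖z‖ = 1) :
    HasSum (fun k : ℕ ↦ k * z ^ k * (q ^ k / (1 - q ^ k))) (poleSum q z) := by
  have hs : Summable fun p : ℕ × ℕ ↦ (p.2 : ℂ) * (z * q ^ (p.1 + 1)) ^ p.2 := by
    have h1 := summable_geometric_of_lt_one (norm_nonneg q) hq
    have h2 : Summable fun n : ℕ ↦ (n : ℝ) * ‖q‖ ^ n := by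
      simpa using summable_pow_mul_geometric_of_norm_lt_one 1 (r := ‖q‖) (by simpa using hq)
    refine .of_norm_bounded (h1.mul_of_nonneg h2 (fun n ↦ by positivity) fun n ↦ by positivity)
      fun ⟨n, k⟩ ↦ ?_
    rcases Nat.eq_zero_or_pos k with rfl | hk
    · simp
    · simp only [norm_mul, norm_pow, hz, one_mul, RCLike.norm_natCast]
      rw [← pow_mul, mul_left_comm, ← pow_add]
      refine mul_le_mul_of_nonneg_left (pow_le_pow_of_le_one (norm_nonneg q) hq.le ?_)
        (by positivity)
      nlinarith
  have hrow (n : ℕ) : ∑' k : ℕ, (k : ℂ) * (z * q ^ (n + 1)) ^ k = poleTerm (z * q ^ (n + 1)) := by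
    refine tsum_coe_mul_geometric_of_norm_lt_one ?_
    rw [norm_mul, hz, one_mul, norm_pow]
    exact pow_lt_one₀ (norm_nonneg q) hq (Nat.succ_ne_zero n)
  have hcol (k : ℕ) : ∑' n : ℕ, (k : ℂ) * (z * q ^ (n + 1)) ^ k =
      k * z ^ k * (q ^ k / (1 - q ^ k)) := by
    rcases Nat.eq_zero_or_pos k with rfl | hk
    · simp
    have hqk : ‖q ^ k‖ < 1 := by
      rw [norm_pow]
      exact pow_lt_one₀ (norm_nonneg q) hq hk.ne'
    rw [div_eq_mul_inv (q ^ k), ← tsum_geometric_of_norm_lt_one hqk, ← mul_assoc, ← tsum_mul_left]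
    congr 1
    ext n
    ring
  have h := hs.prod_symm.prod.hasSum
  simp only [Prod.swap_prod_mk, hcol] at h
  have hcomm : poleSum q z = ∑' k : ℕ, k * z ^ k * (q ^ k / (1 - q ^ k)) := by
    simp only [poleSum, ← hrow, ← hcol]
    exact hs.prod_symm.tsum_comm
  rwa [hcomm]

/-- The quadratic Gauss sum modulo `5`, twisted by `k`. -/
lemma legendreSym_five_mul_gaussSum {R : Type*} [CommRing R] {ζ : R} (hζ : ζ ^ 5 = 1) (k : ℕ) :
    (legendreSym 5 k : R) * (ζ + ζ ^ 4 - ζ ^ 2 - ζ ^ 3) =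
      ζ ^ k + (ζ ^ 4) ^ k - (ζ ^ 2) ^ k - (ζ ^ 3) ^ k := by
  have hmod (x : R) (hx : x ^ 5 = 1) : x ^ k = x ^ (k % 5) := by
    conv_lhs => rw [← Nat.div_add_mod k 5, pow_add, pow_mul, hx, one_pow, one_mul]
  have hpow (m : ℕ) : (ζ ^ m) ^ 5 = 1 := by rw [← pow_mul, mul_comm, pow_mul, hζ, one_pow]
  rw [hmod ζ hζ, hmod _ (hpow 4), hmod _ (hpow 2), hmod _ (hpow 3), legendreSym.mod]
  have h5 : ((k : ℤ) % ((5 : ℕ) : ℤ)) = ((k % 5 : ℕ) : ℤ) := by norm_cast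
  rw [h5]
  have hlt : k % 5 < 5 := Nat.mod_lt _ (by norm_num)
  have l0 : legendreSym 5 0 = 0 := by decide
  have l1 : legendreSym 5 1 = 1 := by decide
  have l2 : legendreSym 5 2 = -1 := by decide
  have l3 : legendreSym 5 3 = -1 := by decide
  have l4 : legendreSym 5 4 = 1 := by decide
  interval_cases k % 5
  · simp [l0]
  · simp [l1]
  · simp only [Nat.cast_ofNat, l2]
    push_cast
    linear_combination (-ζ ^ 3 + ζ) * hζ
  · simp only [Nat.cast_ofNat, l3]
    push_cast
    linear_combination (-ζ ^ 7 - ζ ^ 2 + ζ ^ 4 + ζ) * hζ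
  · simp only [Nat.cast_ofNat, l4]
    push_cast
    linear_combination (-ζ ^ 11 - ζ ^ 6 - ζ + ζ ^ 3 + ζ ^ 7 + ζ ^ 2) * hζ

lemma prod_qPoch_fifth_roots {q ζ : ℂ} (hq : ‖q‖ < 1) (hζ : IsPrimitiveRoot ζ 5) :
    qPoch q q * qPoch q (q * ζ) * qPoch q (q * ζ ^ 2) * qPoch q (q * ζ ^ 3) *
      qPoch q (q * ζ ^ 4) = qPoch (q ^ 5) (q ^ 5) := by
  have hm := multipliable_one_sub_mul_pow hq
  simp only [qPoch]
  rw [← (hm _).tprod_mul (hm _), ← ((hm _).mul (hm _)).tprod_mul (hm _),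
    ← (((hm _).mul (hm _)).mul (hm _)).tprod_mul (hm _),
    ← ((((hm _).mul (hm _)).mul (hm _)).mul (hm _)).tprod_mul (hm _)]
  congr 1
  ext n
  have h1 : 1 + ζ + ζ ^ 2 + ζ ^ 3 + ζ ^ 4 = 0 := by
    simpa [Finset.sum_range_succ] using hζ.geom_sum_eq_zero (by norm_num)
  rw [← pow_mul, mul_comm 5 n, pow_mul]
  linear_combination (ζ ^ 6 * (q * q ^ n) ^ 4 - ζ ^ 6 * (q * q ^ n) ^ 5 - ζ ^ 5 * (q * q ^ n) ^ 3
    + ζ ^ 5 * (q * q ^ n) ^ 5 + ζ ^ 3 * (q * q ^ n) ^ 2 - ζ ^ 3 * (q * q ^ n) ^ 3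
    + ζ * (q * q ^ n) ^ 2 - ζ * (q * q ^ n) ^ 5 - q * q ^ n + (q * q ^ n) ^ 5) * h1

/-- Ramanujan's "Lost Notebook" modulus 5 identity:
`1 - 5 ∑_{n ≥ 1} (n/5) n qⁿ/(1-qⁿ) = (q;q)_∞⁵ / (q⁵;q⁵)_∞` for `|q| < 1`. -/
theorem ramanujan_lost_notebook_mod5 (q : ℂ) (hq : ‖q‖ < 1) :
    1 - 5 * ∑' n : ℕ, (legendreSym 5 ((n : ℤ) + 1) : ℂ) * ((n : ℂ) + 1) * q ^ (n + 1) /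
        (1 - q ^ (n + 1))
      = (∏' n : ℕ, (1 - q ^ (n + 1))) ^ 5 / ∏' n : ℕ, (1 - (q ^ 5) ^ (n + 1)) := by
  rcases eq_or_ne q 0 with rfl | hq0
  · simp
  obtain ⟨ζ, hζ⟩ : ∃ ζ : ℂ, IsPrimitiveRoot ζ 5 := ⟨_, Complex.isPrimitiveRoot_exp 5 (by norm_num)⟩
  have h5 : ζ ^ 5 = 1 := hζ.pow_eq_one
  have hn (m : ℕ) : ‖ζ ^ m‖ = 1 := by rw [norm_pow, hζ.norm'_eq_one (by norm_num), one_pow]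
  have hne (m : ℕ) (h0 : m ≠ 0) (hm : m < 5) : 1 - ζ ^ m ≠ 0 :=
    sub_ne_zero.2 (hζ.pow_ne_one_of_pos_of_lt h0 hm).symm
  have hsum : 1 + ζ + ζ ^ 2 + ζ ^ 3 + ζ ^ 4 = 0 := by
    simpa [Finset.sum_range_succ] using hζ.geom_sum_eq_zero (by norm_num)
  have hζ0 : ζ ≠ 0 := hζ.ne_zero (by norm_num)
  have hi1 : ζ⁻¹ = ζ ^ 4 := by field_simp; exact h5.symm
  have hi2 : (ζ ^ 2)⁻¹ = ζ ^ 3 := by field_simp; exact h5.symm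
  have hprod : ∀ x : ℂ, ∏' n : ℕ, (1 - x ^ (n + 1)) = qPoch x x := fun x ↦ by
    simp only [qPoch, pow_succ']
  set s : ℂ := ζ + ζ ^ 4 - ζ ^ 2 - ζ ^ 3 with hs
  have hs2 : s ^ 2 = 5 := by
    rw [hs]
    linear_combination (4 - ζ - 2 * ζ ^ 2 + ζ ^ 3) * h5 - hsum
  set L := ∑' n : ℕ, (legendreSym 5 ((n : ℤ) + 1) : ℂ) * ((n : ℂ) + 1) * q ^ (n + 1) /
    (1 - q ^ (n + 1)) with hL
  have hlambert : poleSum q ζ + poleSum q (ζ ^ 4) - poleSum q (ζ ^ 2) - poleSum q (ζ ^ 3) =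
      s * L := by
    have h1 := ((((hasSum_poleSum hq (z := ζ) (by simpa using hn 1)).add
      (hasSum_poleSum hq (hn 4))).sub (hasSum_poleSum hq (hn 2))).sub
      (hasSum_poleSum hq (hn 3)))
    rw [← h1.tsum_eq, h1.summable.tsum_eq_zero_add, hL, ← tsum_mul_left]
    simp only [Nat.cast_zero, zero_mul, add_zero, sub_zero, zero_add]
    congr 1
    ext n
    have h2 := legendreSym_five_mul_gaussSum h5 (n + 1)
    push_cast at h2 ⊢
    linear_combination (-(n + 1) * (q ^ (n + 1) / (1 - q ^ (n + 1)))) * h2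
  have hmain := qWeierstrass_sub_qWeierstrass hq hq0 (a := ζ) (b := ζ ^ 2)
    (by simpa using hn 1) (hζ.ne_one (by norm_num)) (hn 2)
    (hζ.pow_ne_one_of_pos_of_lt (by norm_num) (by norm_num))
  have hdiv : ζ / ζ ^ 2 = ζ ^ 4 := by field_simp; exact h5.symm
  have hd (m k : ℕ) (hmk : m + k = 5) : q / ζ ^ m = q * ζ ^ k := by
    rw [div_eq_iff (pow_ne_zero m hζ0), mul_assoc, ← pow_add, add_comm k, hmk, h5, mul_one]
  have ht (m k : ℕ) (hmk : m + k = 5) : qTheta q (ζ ^ m) =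
      (1 - ζ ^ m) * (qPoch q (q * ζ ^ m) * qPoch q (q * ζ ^ k)) := by
    rw [qTheta_eq hq, hd m k hmk]
  have ht1 := ht 1 4 rfl
  rw [pow_one] at ht1
  have hP (m : ℕ) : qPoch q (q * ζ ^ m) ≠ 0 :=
    qPoch_ne_zero hq (by rwa [norm_mul, hn, mul_one])
  have hP1 := hP 1
  rw [pow_one] at hP1
  have hP2 := hP 2
  have hP3 := hP 3
  have hP4 := hP 4
  have hP0 := qPoch_ne_zero hq hq
  have hfive := prod_qPoch_fifth_roots hq hζ
  have hn1 : 1 - ζ ≠ 0 := by simpa using hne 1 (by norm_num) (by norm_num)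
  have hn2 := hne 2 (by norm_num) (by norm_num)
  have hn3 := hne 3 (by norm_num) (by norm_num)
  have hn4 := hne 4 (by norm_num) (by norm_num)
  have hpole : poleTerm ζ - poleTerm (ζ ^ 2) = -s / 5 := by
    rw [poleTerm, poleTerm, hs, div_sub_div _ _ (pow_ne_zero 2 hn1) (pow_ne_zero 2 hn2),
      div_eq_div_iff (mul_ne_zero (pow_ne_zero 2 hn1) (pow_ne_zero 2 hn2)) (by norm_num)]
    linear_combination
      (ζ ^ 6 - 4 * ζ ^ 5 + 3 * ζ ^ 4 + 8 * ζ ^ 3 - 14 * ζ ^ 2 + 6 * ζ) * hsum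
  have hcoef : (1 - ζ ^ 4) / ((1 - ζ ^ 2) * (1 - ζ) ^ 2) = -s / 5 := by
    rw [hs, div_eq_div_iff (mul_ne_zero hn2 (pow_ne_zero 2 hn1)) (by norm_num)]
    linear_combination (-ζ ^ 4 + 4 * ζ ^ 3 - 4 * ζ ^ 2 - 4 * ζ + 5) * hsum
  have hs0 : s ≠ 0 := by rintro h; norm_num [h] at hs2
  rw [qWeierstrass, qWeierstrass, hi1, hi2, ← pow_succ', hdiv, ht1, ht 2 3 rfl, ht 3 2 rfl,
    ht 4 1 rfl, pow_one] at hmain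
  rw [hprod, hprod, ← hfive]
  have hright : qPoch q q ^ 4 / ((1 - ζ ^ 2) * (qPoch q (q * ζ ^ 2) * qPoch q (q * ζ ^ 3)) *
      ((1 - ζ ^ 3) * (qPoch q (q * ζ ^ 3) * qPoch q (q * ζ ^ 2)))) *
      ((1 - ζ ^ 3) * (qPoch q (q * ζ ^ 3) * qPoch q (q * ζ ^ 2)) *
      ((1 - ζ ^ 4) * (qPoch q (q * ζ ^ 4) * qPoch q (q * ζ))) /
      ((1 - ζ) * (qPoch q (q * ζ) * qPoch q (q * ζ ^ 4))) ^ 2) =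
      (1 - ζ ^ 4) / ((1 - ζ ^ 2) * (1 - ζ) ^ 2) *
      (qPoch q q ^ 5 / (qPoch q q * qPoch q (q * ζ) * qPoch q (q * ζ ^ 2) *
        qPoch q (q * ζ ^ 3) * qPoch q (q * ζ ^ 4))) := by
    field_simp
  rw [hright, hcoef] at hmain
  refine mul_left_cancel₀ (show -s / 5 ≠ 0 by simpa using hs0) ?_
  rw [← hmain]
  linear_combination -hpole - hlambert
end

section
/- The generating function identity ∑_{n≥0} p(5n+4)·q^n = 5·(q^5;q^5)_∞^5/(q;q)_∞^6 holds as formal power series, where p(n) is the number of partitions of n. -/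
open scoped BigOperators

section PowerSeriesIdentities

open Finset PowerSeries

section GaussBinom

variable {R : Type*} [CommRing R]

/-- The finite product `(1 - q) (1 - q²) ⋯ (1 - qⁿ)`. -/
def qProd (q : R) (n : ℕ) : R := ∏ i ∈ range n, (1 - q ^ (i + 1))

theorem qProd_succ (q : R) (n : ℕ) : qProd q (n + 1) = qProd q n * (1 - q ^ (n + 1)) :=
  prod_range_succ _ _

/-- Gaussian binomial coefficients. -/
def gaussBinom (q : R) : ℕ → ℕ → R
  | _, 0 => 1
  | 0, _ + 1 => 0
  | m + 1, k + 1 => gaussBinom q m k + q ^ (k + 1) * gaussBinom q m (k + 1)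

@[simp] theorem gaussBinom_zero_right (q : R) (m : ℕ) : gaussBinom q m 0 = 1 := by
  cases m <;> simp [gaussBinom]

theorem gaussBinom_succ_succ (q : R) (m k : ℕ) :
    gaussBinom q (m + 1) (k + 1) = gaussBinom q m k + q ^ (k + 1) * gaussBinom q m (k + 1) := by
  simp [gaussBinom]

theorem gaussBinom_eq_zero_of_lt (q : R) {m k : ℕ} (h : m < k) : gaussBinom q m k = 0 := by
  induction m generalizing k with
  | zero => obtain ⟨k, rfl⟩ := Nat.exists_eq_succ_of_ne_zero h.ne'; simp [gaussBinom]
  | succ m ih =>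
    obtain ⟨k, rfl⟩ := Nat.exists_eq_succ_of_ne_zero (Nat.ne_zero_of_lt h)
    rw [Nat.succ_eq_add_one, gaussBinom_succ_succ, ih (by omega), ih (by omega)]
    simp

theorem gaussBinom_self (q : R) (m : ℕ) : gaussBinom q m m = 1 := by
  induction m with
  | zero => simp
  | succ m ih => simp [gaussBinom_succ_succ, ih, gaussBinom_eq_zero_of_lt]

theorem gaussBinom_mul_qProd (q : R) (k l : ℕ) :
    gaussBinom q (k + l) k * qProd q k * qProd q l = qProd q (k + l) := by
  induction k generalizing l with
  | zero => simp [qProd]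
  | succ k ihk =>
    induction l with
    | zero => simp [gaussBinom_self, qProd]
    | succ l ihl =>
      have h1 := ihk (l + 1)
      rw [show k + (l + 1) = k + 1 + l by ring] at h1
      rw [← add_assoc, gaussBinom_succ_succ, qProd_succ q (k + 1 + l)]
      calc _ = (gaussBinom q (k + 1 + l) k * qProd q k * qProd q (l + 1)) * (1 - q ^ (k + 1))
            + q ^ (k + 1) * (gaussBinom q (k + 1 + l) (k + 1) * qProd q (k + 1) * qProd q l)
              * (1 - q ^ (l + 1)) := by rw [qProd_succ q k, qProd_succ q l]; ring
        _ = _ := by rw [h1, ihl]; ring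

/-- The finite `q`-binomial theorem. -/
theorem prod_sub_mul_pow_eq_sum_gaussBinom (q x y : R) (m : ℕ) :
    ∏ i ∈ range m, (y - x * q ^ i) =
      ∑ k ∈ range (m + 1), (-1) ^ k * q ^ (k.choose 2) * gaussBinom q m k * x ^ k * y ^ (m - k) := by
  induction m generalizing x with
  | zero => simp
  | succ m ih =>
    have h : ∏ i ∈ range m, (y - x * q ^ (i + 1)) = ∏ i ∈ range m, (y - x * q * q ^ i) :=
      prod_congr rfl fun i _ ↦ by ring
    rw [prod_range_succ', h, ih, mul_sub, sum_range_succ' _ (m + 1)]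
    have h1 : ∀ k ∈ range (m + 1),
        (-1) ^ (k + 1) * q ^ ((k + 1).choose 2) * gaussBinom q (m + 1) (k + 1) * x ^ (k + 1) *
          y ^ (m + 1 - (k + 1)) =
        (-1) ^ (k + 1) * q ^ ((k + 1).choose 2) * gaussBinom q m (k + 1) * (x * q) ^ (k + 1) *
          y ^ (m + 1 - (k + 1)) - (-1) ^ k * q ^ (k.choose 2) * gaussBinom q m k * (x * q) ^ k *
          y ^ (m - k) * x := by
      intro k _
      rw [gaussBinom_succ_succ, Nat.choose_succ_succ' k 1, Nat.choose_one_right,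
        Nat.add_sub_add_right]
      ring
    rw [sum_congr rfl h1, sum_sub_distrib, ← sum_mul]
    have h2 : (∑ k ∈ range (m + 1), (-1) ^ k * q ^ (k.choose 2) * gaussBinom q m k * (x * q) ^ k *
          y ^ (m - k)) * y = ∑ k ∈ range (m + 1), (-1) ^ (k + 1) * q ^ ((k + 1).choose 2) *
            gaussBinom q m (k + 1) * (x * q) ^ (k + 1) * y ^ (m + 1 - (k + 1)) + y ^ (m + 1) := by
      rw [sum_range_succ', add_mul, sum_mul, sum_range_succ _ m,
        gaussBinom_eq_zero_of_lt q (Nat.lt_succ_self m), mul_zero, zero_mul, zero_mul, add_zero]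
      congr 1
      · refine sum_congr rfl fun k hk ↦ ?_
        rw [mem_range] at hk
        rw [mul_assoc _ _ y, ← pow_succ]
        congr 2
        omega
      · simp [pow_succ]
    simp only [pow_zero, mul_one]
    rw [h2]
    simp
    ring

theorem map_gaussBinom {S : Type*} [CommRing S] (f : R →+* S) (q : R) (m k : ℕ) :
    f (gaussBinom q m k) = gaussBinom (f q) m k := by
  induction m generalizing k with
  | zero => cases k <;> simp [gaussBinom]
  | succ m ih => cases k <;> simp [gaussBinom_succ_succ, ih]

theorem prod_pow_sub_pow (q : R) (n : ℕ) :
    ∏ i ∈ range n, (q ^ n - q ^ i) = (-1) ^ n * q ^ n.choose 2 * qProd q n := by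
  have h : ∀ i ∈ range n, q ^ n - q ^ i = (-1) * q ^ i * (1 - q ^ (n - 1 - i + 1)) := by
    intro i hi
    rw [mem_range] at hi
    rw [show n - 1 - i + 1 = n - i by omega, mul_sub, mul_assoc _ _ (q ^ (n - i)), ← pow_add,
      Nat.add_sub_cancel' hi.le]
    ring
  rw [prod_congr rfl h, prod_mul_distrib, prod_range_reflect (fun j ↦ 1 - q ^ (j + 1)),
    prod_mul_distrib, prod_const, card_range, prod_pow_eq_pow_sum, sum_range_id,
    Nat.choose_two_right, qProd]

/-- The derivative at `x = 1` of the `q`-binomial theorem for `∏ (qⁿ - x qⁱ)` over `i ≤ 2 n`. -/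
theorem sum_mul_gaussBinom_eq (q : R) (n : ℕ) :
    ∑ k ∈ range (2 * n + 2), (-1) ^ k * k * q ^ (k.choose 2 + n * (2 * n + 1 - k)) *
      gaussBinom q (2 * n + 1) k =
    (-1) ^ (n + 1) * q ^ ((n + 1).choose 2 + n * n) * qProd q n ^ 2 := by
  have key := prod_sub_mul_pow_eq_sum_gaussBinom (Polynomial.C q) Polynomial.X
    (Polynomial.C q ^ n) (2 * n + 1)
  have hsum : ∀ k ∈ range (2 * n + 1 + 1), (-1) ^ k * Polynomial.C q ^ (k.choose 2) *
      gaussBinom (Polynomial.C q) (2 * n + 1) k * Polynomial.X ^ k *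
        (Polynomial.C q ^ n) ^ (2 * n + 1 - k) =
      Polynomial.C ((-1) ^ k * q ^ (k.choose 2 + n * (2 * n + 1 - k)) *
        gaussBinom q (2 * n + 1) k) * Polynomial.X ^ k := by
    intro k _
    simp only [← map_gaussBinom, map_mul, map_pow, map_neg, map_one, pow_add, pow_mul]
    ring
  rw [sum_congr rfl hsum, show range (2 * n + 1) = range (n + (n + 1)) by congr 1; ring,
    prod_range_add, prod_range_succ'] at key
  have hd := congrArg (fun p ↦ Polynomial.eval 1 (Polynomial.derivative p)) key
  simp only [Polynomial.derivative_mul, Polynomial.eval_add, Polynomial.eval_mul,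
    Polynomial.derivative_sum, Polynomial.eval_finsetSum, Polynomial.derivative_C,
    Polynomial.eval_prod, ← Polynomial.C_pow, Polynomial.derivative_X_pow] at hd
  simp only [Polynomial.eval_sub, Polynomial.eval_C, Polynomial.eval_mul, Polynomial.eval_X,
    one_mul, add_zero, sub_self, mul_zero, zero_add, Polynomial.derivative_sub,
    Polynomial.derivative_C, Polynomial.derivative_mul, Polynomial.derivative_X, zero_sub,
    Polynomial.eval_neg, Polynomial.eval_zero, Polynomial.eval_pow, one_pow, mul_one] at hd
  have h2 : ∏ i ∈ range n, (q ^ n - q ^ (n + (i + 1))) = q ^ (n * n) * qProd q n := by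
    have h : ∀ i ∈ range n, q ^ n - q ^ (n + (i + 1)) = q ^ n * (1 - q ^ (i + 1)) :=
      fun i _ ↦ by ring
    rw [prod_congr rfl h, prod_mul_distrib, prod_const, card_range, ← pow_mul, qProd]
  rw [h2, prod_pow_sub_pow] at hd
  rw [Nat.choose_succ_succ' n 1, Nat.choose_one_right]
  calc _ = _ := sum_congr rfl fun k _ ↦ by ring
    _ = _ := hd.symm
    _ = _ := by ring

end GaussBinom

section Jacobi

variable (R : Type*) [CommRing R]

theorem X_pow_dvd_pentagonalSeries_sub_qProd {m n : ℕ} (h : m ≤ n) :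
    X ^ (m + 1) ∣ pentagonalSeries R - qProd X n := by
  rw [X_pow_dvd_iff]
  intro i hi
  have key : ∀ k, (qProd (X : R⟦X⟧) (n + k)).coeff i = (qProd (X : R⟦X⟧) n).coeff i := by
    intro k
    induction k with
    | zero => rfl
    | succ k ih =>
      rw [← add_assoc, qProd_succ, mul_sub, mul_one, map_sub, ih, coeff_mul_X_pow',
        if_neg (by omega), sub_zero]
  obtain ⟨s, hs⟩ := Filter.eventually_atTop.mp (coeff_prod_one_sub_X_pow_eventually_eq R i)
  obtain ⟨N, hN⟩ := s.exists_nat_subset_range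
  rw [map_sub, ← hs (range (n + N)) (hN.trans (by simp)), sub_eq_zero]
  exact key N

theorem isUnit_pentagonalSeries : IsUnit (pentagonalSeries R) := by
  rw [isUnit_iff_constantCoeff, ← coeff_zero_eq_constantCoeff_apply]
  have := coeff_pentagonalSeries_pentagonal R 0
  simp [pentagonal_def] at this
  simp [this]

/-- The exponent `t` with `k (k - 1) / 2 + n (2 n + 1 - k) = n (n + 1) / 2 + n² + t`; it is a
triangular number. -/
def shiftedTriangle (n k : ℕ) : ℕ := if k ≤ n then (n - k + 1).choose 2 else (k - n).choose 2

theorem choose_two_add_mul_eq {n k : ℕ} (h : k ≤ 2 * n + 1) :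
    k.choose 2 + n * (2 * n + 1 - k) = (n + 1).choose 2 + n * n + shiftedTriangle n k := by
  have hc (a : ℕ) : (((a + 1).choose 2 : ℕ) : ℚ) = (a + 1) * a / 2 := by
    rw [Nat.cast_choose_two]; push_cast; ring
  unfold shiftedTriangle
  split_ifs with hk
  · obtain ⟨d, rfl⟩ := Nat.exists_eq_add_of_le hk
    rw [show 2 * (k + d) + 1 - k = k + 2 * d + 1 by omega, Nat.add_sub_cancel_left]
    qify
    rw [hc, hc, Nat.cast_choose_two]
    push_cast
    ring
  · obtain ⟨d, rfl⟩ := Nat.exists_eq_add_of_lt (not_le.mp hk)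
    obtain ⟨e, rfl⟩ := Nat.exists_eq_add_of_le (show d ≤ n by omega)
    rw [show 2 * (d + e) + 1 - (d + e + d + 1) = e by omega,
      show d + e + d + 1 - (d + e) = d + 1 by omega]
    qify
    rw [hc, hc, hc]
    push_cast
    ring

theorem le_min_add_shiftedTriangle {n k : ℕ} (h : k ≤ 2 * n + 1) :
    n ≤ min k (2 * n + 1 - k) + shiftedTriangle n k := by
  have hc (a : ℕ) : a ≤ (a + 1).choose 2 := by
    rw [Nat.choose_succ_succ' a 1, Nat.choose_one_right]; omega
  unfold shiftedTriangle
  split_ifs with hk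
  · have := hc (n - k)
    omega
  · have := hc (k - n - 1)
    rw [show k - n - 1 + 1 = k - n by omega] at this
    omega

theorem X_pow_dvd_qProd_mul_gaussBinom_sub_one {n k l j : ℕ} (hk : j ≤ k) (hl : j ≤ l)
    (hn : j ≤ n) : X ^ (j + 1) ∣ qProd (X : R⟦X⟧) n * gaussBinom X (k + l) k - 1 := by
  have h := gaussBinom_mul_qProd (X : R⟦X⟧) k l
  let π := Ideal.Quotient.mk (Ideal.span {(X : R⟦X⟧) ^ (j + 1)})
  have hπ {i : ℕ} (hi : j ≤ i) : π (qProd X i) = π (pentagonalSeries R) := by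
    symm
    rw [Ideal.Quotient.eq, Ideal.mem_span_singleton]
    exact X_pow_dvd_pentagonalSeries_sub_qProd R hi
  have hu := (isUnit_pentagonalSeries R).map π
  have h' := congrArg π h
  rw [map_mul, map_mul, hπ hk, hπ hl, hπ (by omega : j ≤ k + l)] at h'
  rw [← Ideal.mem_span_singleton, ← Ideal.Quotient.eq]
  change π _ = π _
  rw [map_mul, hπ hn, map_one, mul_comm]
  exact hu.mul_eq_right.mp h'

/-- A weak form of Jacobi's identity `(q;q)_∞³ = ∑ (-1)ⁿ (2n+1) q ^ (n (n + 1) / 2)`. -/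
theorem coeff_pentagonalSeries_pow_three_eq_zero {n : ℕ} (h : ∀ a : ℕ, a.choose 2 ≠ n) :
    (pentagonalSeries R ^ 3).coeff n = 0 := by
  have hfin : (-1) ^ (n + 1) * qProd (X : R⟦X⟧) n ^ 2 = ∑ k ∈ range (2 * n + 2),
      (-1) ^ k * (k : R⟦X⟧) * X ^ shiftedTriangle n k * gaussBinom X (2 * n + 1) k := by
    refine X_pow_mul_cancel (k := (n + 1).choose 2 + n * n) ?_
    rw [mul_left_comm, ← mul_assoc, ← sum_mul_gaussBinom_eq, mul_sum]
    refine sum_congr rfl fun k hk ↦ ?_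
    rw [choose_two_add_mul_eq (by simp at hk; omega), pow_add]
    ring
  have hE : (pentagonalSeries R ^ 3).coeff n = (qProd (X : R⟦X⟧) n ^ 3).coeff n := by
    rw [← sub_eq_zero, ← map_sub]
    exact X_pow_dvd_iff.mp ((X_pow_dvd_pentagonalSeries_sub_qProd R le_rfl).trans
      (sub_dvd_pow_sub_pow _ _ 3)) n (Nat.lt_succ_self n)
  have hφ : qProd (X : R⟦X⟧) n ^ 3 = (-1) ^ (n + 1) * ∑ k ∈ range (2 * n + 2),
      (-1) ^ k * (k : R⟦X⟧) * X ^ shiftedTriangle n k * (qProd X n * gaussBinom X (2 * n + 1) k) := by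
    calc _ = (-1) ^ (n + 1) * qProd X n * ((-1) ^ (n + 1) * qProd (X : R⟦X⟧) n ^ 2) := by
          have : ((-1) ^ (n + 1) * (-1) ^ (n + 1) : R⟦X⟧) = 1 := by simp [← mul_pow]
          linear_combination (-qProd (X : R⟦X⟧) n ^ 3) * this
      _ = _ := by
          rw [hfin, mul_assoc, mul_sum]
          congr 1
          exact sum_congr rfl fun k _ ↦ by ring
  have hmod : X ^ (n + 1) ∣ qProd (X : R⟦X⟧) n ^ 3 - (-1) ^ (n + 1) * ∑ k ∈ range (2 * n + 2),
      (-1) ^ k * (k : R⟦X⟧) * X ^ shiftedTriangle n k := by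
    rw [hφ, ← mul_sub, ← sum_sub_distrib]
    refine Dvd.dvd.mul_left (dvd_sum fun k hk ↦ ?_) _
    have hk' : k ≤ 2 * n + 1 := by simp at hk; omega
    have hd := X_pow_dvd_qProd_mul_gaussBinom_sub_one R (min_le_left k (2 * n + 1 - k))
      (min_le_right k (2 * n + 1 - k)) (show min k (2 * n + 1 - k) ≤ n by omega)
    rw [Nat.add_sub_cancel' hk'] at hd
    have hle := le_min_add_shiftedTriangle hk'
    rw [← mul_sub_one, mul_assoc]
    refine Dvd.dvd.mul_left (dvd_trans (pow_dvd_pow X ?_) (pow_add (X : R⟦X⟧)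
      (shiftedTriangle n k) (min k (2 * n + 1 - k) + 1) ▸ mul_dvd_mul_left _ hd)) _
    omega
  have hco := X_pow_dvd_iff.mp hmod n (Nat.lt_succ_self n)
  rw [map_sub, sub_eq_zero] at hco
  have hc : ((-1) ^ (n + 1) * ∑ k ∈ range (2 * n + 2),
      (-1) ^ k * (k : R⟦X⟧) * X ^ shiftedTriangle n k) = C ((-1) ^ (n + 1)) *
        ∑ k ∈ range (2 * n + 2), C ((-1) ^ k * (k : R)) * X ^ shiftedTriangle n k := by simp
  rw [hE, hco, hc, coeff_C_mul, map_sum, sum_eq_zero, mul_zero]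
  intro k _
  rw [coeff_C_mul, coeff_X_pow, if_neg, mul_zero]
  unfold shiftedTriangle
  split_ifs
  exacts [(h _).symm, (h _).symm]

end Jacobi

section Residue

variable {R : Type*} [CommRing R] {m : ℕ}

/-- The part of a power series made of the terms whose exponent is `r` modulo `m`. -/
noncomputable def residuePart (r : ZMod m) : R⟦X⟧ →+ R⟦X⟧ where
  toFun F := PowerSeries.mk fun n ↦ if (n : ZMod m) = r then F.coeff n else 0
  map_zero' := by ext; simp
  map_add' F G := by ext; simp only [coeff_mk, map_add]; split_ifs <;> simp

theorem coeff_residuePart (r : ZMod m) (F : R⟦X⟧) (n : ℕ) :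
    (residuePart r F).coeff n = if (n : ZMod m) = r then F.coeff n else 0 := by
  simp [residuePart]

/-- All exponents of the power series are `r` modulo `m`. -/
def SupportedOnResidue (F : R⟦X⟧) (r : ZMod m) : Prop :=
  ∀ n : ℕ, (n : ZMod m) ≠ r → F.coeff n = 0

theorem supportedOnResidue_residuePart (r : ZMod m) (F : R⟦X⟧) :
    SupportedOnResidue (residuePart r F) r := fun n hn ↦ by
  rw [coeff_residuePart, if_neg hn]

namespace SupportedOnResidue

variable {F G : R⟦X⟧} {r s : ZMod m}

theorem residuePart_mul (hG : SupportedOnResidue G s) (F : R⟦X⟧) (r : ZMod m) :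
    residuePart r (F * G) = residuePart (r - s) F * G := by
  ext n
  have h0 : (if (n : ZMod m) = r then (F * G).coeff n else 0) =
      ∑ p ∈ antidiagonal n, if (n : ZMod m) = r then F.coeff p.1 * G.coeff p.2 else 0 := by
    split_ifs
    · exact coeff_mul _ _ _
    · simp
  rw [coeff_residuePart, h0, coeff_mul]
  refine sum_congr rfl fun ⟨i, j⟩ hij ↦ ?_
  rw [HasAntidiagonal.mem_antidiagonal] at hij
  subst hij
  rw [coeff_residuePart]
  by_cases hj : (j : ZMod m) = s
  · simp only [Nat.cast_add, hj, eq_sub_iff_add_eq]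
    split_ifs <;> simp
  · simp [hG j hj]

theorem residuePart_eq (hF : SupportedOnResidue F r) (h : r = s) : residuePart s F = F := by
  subst h
  ext n
  rw [coeff_residuePart]
  split_ifs with h
  · rfl
  · exact (hF n h).symm

theorem residuePart_eq_zero (hF : SupportedOnResidue F r) (h : r ≠ s) : residuePart s F = 0 := by
  ext n
  rw [coeff_residuePart, map_zero]
  split_ifs with hn
  · exact hF n (hn ▸ h.symm)
  · rfl

theorem mul (hF : SupportedOnResidue F r) (hG : SupportedOnResidue G s) :
    SupportedOnResidue (F * G) (r + s) := by
  have h : residuePart (r + s) (F * G) = F * G := by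
    rw [hG.residuePart_mul, add_sub_cancel_right, hF.residuePart_eq rfl]
  exact h ▸ supportedOnResidue_residuePart _ _

theorem pow (hF : SupportedOnResidue F r) (k : ℕ) : SupportedOnResidue (F ^ k) ((k : ZMod m) * r) := by
  induction k with
  | zero =>
    intro n hn
    rw [pow_zero, coeff_one, if_neg]
    rintro rfl
    simp at hn
  | succ k ih =>
    rw [pow_succ, Nat.cast_succ, add_mul, one_mul]
    exact ih.mul hF

theorem rescale_eq {ζ : R} (hζ : ζ ^ m = 1) {k : ℕ} (hF : SupportedOnResidue F (k : ZMod m)) :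
    rescale ζ F = C (ζ ^ k) * F := by
  ext n
  rw [coeff_rescale, coeff_C_mul]
  by_cases hn : (n : ZMod m) = k
  · rw [pow_eq_pow_of_modEq ((ZMod.natCast_eq_natCast_iff _ _ _).mp hn) hζ]
  · rw [hF n hn, mul_zero, mul_zero]

end SupportedOnResidue

end Residue

section Dissection

variable (R : Type*) [CommRing R]

theorem residue_pentagonal (k : ℤ) :
    (pentagonal k : ZMod 5) = 0 ∨ (pentagonal k : ZMod 5) = 1 ∨ (pentagonal k : ZMod 5) = 2 := by
  have h : ∀ k p : ZMod 5, 2 * p = k * (3 * k - 1) → p = 0 ∨ p = 1 ∨ p = 2 := by decide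
  exact h k _ (by exact_mod_cast congrArg (Int.cast : ℤ → ZMod 5) (two_mul_natCast_pentagonal k))

theorem exists_eq_of_pentagonal_residue_eq_one {j : ℤ} (h : (pentagonal j : ZMod 5) = 1) :
    ∃ k : ℤ, j = 1 - 5 * k := by
  have h' : ∀ k : ZMod 5, 2 * 1 = k * (3 * k - 1) → k = 1 := by decide
  have h1 : (j : ZMod 5) = 1 := by
    refine h' _ ?_
    have h2 : 2 * (pentagonal j : ZMod 5) = j * (3 * j - 1) := by
      exact_mod_cast congrArg (Int.cast : ℤ → ZMod 5) (two_mul_natCast_pentagonal j)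
    rwa [h] at h2
  obtain ⟨k, hk⟩ := (ZMod.intCast_zmod_eq_zero_iff_dvd (j - 1) 5).mp (by simp [h1])
  exact ⟨-k, by push_cast at hk; linarith⟩

theorem pentagonal_one_sub_five_mul (k : ℤ) : pentagonal (1 - 5 * k) = 25 * pentagonal k + 1 := by
  have h1 := two_mul_natCast_pentagonal k
  have h2 := two_mul_natCast_pentagonal (1 - 5 * k)
  zify
  linarith

theorem pentagonalSeries_eq_add_residuePart : pentagonalSeries R =
    residuePart (0 : ZMod 5) (pentagonalSeries R) + residuePart (1 : ZMod 5) (pentagonalSeries R) +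
      residuePart (2 : ZMod 5) (pentagonalSeries R) := by
  ext n
  simp only [map_add, coeff_residuePart]
  by_cases h : n ∈ Set.range pentagonal
  · obtain ⟨k, rfl⟩ := h
    have h01 : (0 : ZMod 5) ≠ 1 := by decide
    have h02 : (0 : ZMod 5) ≠ 2 := by decide
    have h12 : (1 : ZMod 5) ≠ 2 := by decide
    rcases residue_pentagonal k with h | h | h <;>
      simp [h, h01, h02, h12, h01.symm, h02.symm, h12.symm]
  · simp [coeff_pentagonalSeries_eq_zero R h]

theorem residuePart_one_pentagonalSeries : residuePart (1 : ZMod 5) (pentagonalSeries R) =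
    -(X * expand 25 (by norm_num) (pentagonalSeries R)) := by
  ext n
  rw [coeff_residuePart, map_neg]
  cases n with
  | zero => simp [show (0 : ZMod 5) ≠ 1 by decide]
  | succ n =>
    rw [mul_comm, coeff_succ_mul_X, coeff_expand]
    by_cases h : n + 1 ∈ Set.range pentagonal ∧ ((n + 1 : ℕ) : ZMod 5) = 1
    · obtain ⟨⟨j, hj⟩, h1⟩ := h
      rw [if_pos h1]
      rw [← hj] at h1 ⊢
      obtain ⟨k, rfl⟩ := exists_eq_of_pentagonal_residue_eq_one h1
      rw [pentagonal_one_sub_five_mul, Nat.add_right_cancel_iff] at hj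
      subst hj
      rw [coeff_pentagonalSeries_pentagonal, if_pos (dvd_mul_right _ _),
        Nat.mul_div_cancel_left _ (by norm_num), coeff_pentagonalSeries_pentagonal]
      rw [show 1 - 5 * k = 1 - k - 2 * (2 * k) by ring, Int.negOnePow_sub,
        Int.negOnePow_two_mul, mul_one, Int.negOnePow_sub, Int.negOnePow_one]
      simp
    · have hl : (if ((n + 1 : ℕ) : ZMod 5) = 1 then (pentagonalSeries R).coeff (n + 1) else 0) = 0 := by
        split_ifs with h1
        · exact coeff_pentagonalSeries_eq_zero R fun h2 ↦ h ⟨h2, h1⟩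
        · rfl
      rw [hl, eq_comm, neg_eq_zero]
      split_ifs with hd
      · obtain ⟨t, rfl⟩ := hd
        rw [Nat.mul_div_cancel_left _ (by norm_num)]
        refine coeff_pentagonalSeries_eq_zero R ?_
        rintro ⟨k, rfl⟩
        refine h ⟨⟨1 - 5 * k, pentagonal_one_sub_five_mul k⟩, ?_⟩
        push_cast
        rw [show (25 : ZMod 5) = 0 by decide, zero_mul, zero_add]
      · rfl

theorem residuePart_zero_mul_residuePart_two :
    residuePart (0 : ZMod 5) (pentagonalSeries ℂ) * residuePart (2 : ZMod 5) (pentagonalSeries ℂ) =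
      -residuePart (1 : ZMod 5) (pentagonalSeries ℂ) ^ 2 := by
  have hE := pentagonalSeries_eq_add_residuePart ℂ
  have ha := supportedOnResidue_residuePart (0 : ZMod 5) (pentagonalSeries ℂ)
  have hc := supportedOnResidue_residuePart (1 : ZMod 5) (pentagonalSeries ℂ)
  have hb := supportedOnResidue_residuePart (2 : ZMod 5) (pentagonalSeries ℂ)
  have ha0 : residuePart (0 : ZMod 5) (pentagonalSeries ℂ) ≠ 0 := by
    intro h
    have h0 := congrArg (coeff 0) h
    have h1 := coeff_pentagonalSeries_pentagonal ℂ 0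
    simp only [pentagonal_def] at h1
    simp [coeff_residuePart] at h0 h1
    simp [h0] at h1
  set a := residuePart (0 : ZMod 5) (pentagonalSeries ℂ)
  set c := residuePart (1 : ZMod 5) (pentagonalSeries ℂ)
  set b := residuePart (2 : ZMod 5) (pentagonalSeries ℂ)
  have h3 : residuePart (2 : ZMod 5) (pentagonalSeries ℂ ^ 3) = 0 := by
    ext n
    rw [coeff_residuePart, map_zero]
    split_ifs with hn
    · refine coeff_pentagonalSeries_pow_three_eq_zero ℂ fun k hk ↦ ?_
      have h : ∀ k x : ZMod 5, 2 * x = k * (k - 1) → x ≠ 2 := by decide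
      refine h k n ?_ hn
      rw [← hk]
      cases k with
      | zero => simp
      | succ k =>
        have := congrArg (Nat.cast : ℕ → ZMod 5) (Nat.add_one_mul_choose_eq k 1)
        push_cast [Nat.choose_one_right] at this ⊢
        linear_combination -this
    · rfl
  have hexp : pentagonalSeries ℂ ^ 3 = a ^ 3 + c ^ 3 + b ^ 3 + a ^ 2 * c + a ^ 2 * c + a ^ 2 * c
    + a ^ 2 * b + a ^ 2 * b + a ^ 2 * b + a * c ^ 2 + a * c ^ 2 + a * c ^ 2 +
    c ^ 2 * b + c ^ 2 * b + c ^ 2 * b + a * b ^ 2 + a * b ^ 2 + a * b ^ 2 +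
    c * b ^ 2 + c * b ^ 2 + c * b ^ 2 + (a * c * b + a * c * b + a * c * b + a * c * b + a * c * b
    + a * c * b) := by rw [hE]; ring
  have hmul : 3 * a * (a * b + c ^ 2) = 0 := by
    rw [← h3, hexp]
    simp only [map_add]
    rw [(ha.pow 3).residuePart_eq_zero (by decide), (hc.pow 3).residuePart_eq_zero (by decide),
      (hb.pow 3).residuePart_eq_zero (by decide),
      ((ha.pow 2).mul hc).residuePart_eq_zero (by decide),
      ((ha.pow 2).mul hb).residuePart_eq (by decide),
      (ha.mul (hc.pow 2)).residuePart_eq (by decide),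
      ((hc.pow 2).mul hb).residuePart_eq_zero (by decide),
      (ha.mul (hb.pow 2)).residuePart_eq_zero (by decide),
      (hc.mul (hb.pow 2)).residuePart_eq_zero (by decide),
      ((ha.mul hc).mul hb).residuePart_eq_zero (by decide)]
    ring
  have h30 : (3 : ℂ⟦X⟧) ≠ 0 := by
    intro h
    have := congrArg constantCoeff h
    rw [map_ofNat, map_zero] at this
    norm_num at this
  exact eq_neg_of_add_eq_zero_left ((mul_eq_zero.mp hmul).resolve_left (mul_ne_zero h30 ha0))

end Dissection

section FiniteProduct

variable {R : Type*} [CommRing R] {z : R}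

theorem prod_range_five_add (hz : 1 + z + z ^ 2 + z ^ 3 + z ^ 4 = 0) (a b c : R) :
    ∏ i ∈ range 5, (a + z ^ i * c + (z ^ i) ^ 2 * b) =
      a ^ 5 + b ^ 5 + c ^ 5 - 5 * a * b * c ^ 3 + 5 * a ^ 2 * b ^ 2 * c := by
  have h5 : z ^ 5 = 1 := by linear_combination (z - 1) * hz
  simp only [prod_range_succ, prod_range_zero]
  grind

theorem prod_range_five_one_sub (hz : 1 + z + z ^ 2 + z ^ 3 + z ^ 4 = 0) (y : R) :
    ∏ i ∈ range 5, (1 - z ^ i * y) = 1 - y ^ 5 := by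
  have h5 : z ^ 5 = 1 := by linear_combination (z - 1) * hz
  simp only [prod_range_succ, prod_range_zero]
  grind

theorem geom_five_pow_eq_zero (hz : 1 + z + z ^ 2 + z ^ 3 + z ^ 4 = 0) {n : ℕ} (hn : ¬ 5 ∣ n) :
    1 + z ^ n + (z ^ n) ^ 2 + (z ^ n) ^ 3 + (z ^ n) ^ 4 = 0 := by
  have h5 : z ^ 5 = 1 := by linear_combination (z - 1) * hz
  have : z ^ n = z ^ (n % 5) := by
    conv_lhs => rw [← Nat.div_add_mod n 5, pow_add, pow_mul, h5, one_pow, one_mul]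
  rw [this]
  have h1 : n % 5 < 5 := Nat.mod_lt _ (by norm_num)
  have h2 : n % 5 ≠ 0 := fun h ↦ hn (Nat.dvd_of_mod_eq_zero h)
  interval_cases n % 5 <;> grind

theorem prod_range_five_one_sub_pow_of_not_dvd (hz : 1 + z + z ^ 2 + z ^ 3 + z ^ 4 = 0) (y : R)
    {n : ℕ} (hn : ¬ 5 ∣ n) : ∏ i ∈ range 5, (1 - (z ^ i * y) ^ n) = 1 - (y ^ 5) ^ n := by
  rw [← pow_mul, mul_comm 5 n, pow_mul,
    ← prod_range_five_one_sub (geom_five_pow_eq_zero hz hn) (y ^ n)]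
  refine prod_congr rfl fun i _ ↦ ?_
  rw [mul_pow, ← pow_mul, ← pow_mul, mul_comm i n]

theorem prod_range_five_one_sub_pow_of_dvd (hz : 1 + z + z ^ 2 + z ^ 3 + z ^ 4 = 0) (y : R)
    (n : ℕ) : ∏ i ∈ range 5, (1 - (z ^ i * y) ^ (5 * n)) = (1 - (y ^ 5) ^ n) ^ 5 := by
  have h5 : z ^ 5 = 1 := by linear_combination (z - 1) * hz
  rw [prod_congr rfl (g := fun _ ↦ 1 - (y ^ 5) ^ n), prod_const, card_range]
  intro i _
  rw [mul_pow, ← pow_mul, ← pow_mul, mul_left_comm, pow_mul z 5, h5, one_pow, one_mul]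

theorem prod_qProd_mul_qProd (hz : 1 + z + z ^ 2 + z ^ 3 + z ^ 4 = 0) (y : R) (n : ℕ) :
    (∏ i ∈ range 5, qProd (z ^ i * y) (5 * n)) * qProd (y ^ 25) n =
      qProd (y ^ 5) (5 * n) * qProd (y ^ 5) n ^ 5 := by
  induction n with
  | zero => simp [qProd]
  | succ n ih =>
    have h1 := prod_range_five_one_sub_pow_of_not_dvd hz y (n := 5 * n + 1) (by omega)
    have h2 := prod_range_five_one_sub_pow_of_not_dvd hz y (n := 5 * n + 1 + 1) (by omega)
    have h3 := prod_range_five_one_sub_pow_of_not_dvd hz y (n := 5 * n + 1 + 1 + 1) (by omega)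
    have h4 := prod_range_five_one_sub_pow_of_not_dvd hz y (n := 5 * n + 1 + 1 + 1 + 1) (by omega)
    have h5 := prod_range_five_one_sub_pow_of_dvd hz y (n + 1)
    rw [show 5 * (n + 1) = 5 * n + 1 + 1 + 1 + 1 + 1 by ring] at h5 ⊢
    have h6 : (y ^ 5) ^ (5 * n + 1 + 1 + 1 + 1 + 1) = (y ^ 25) ^ (n + 1) := by
      rw [← pow_mul, ← pow_mul]; ring
    simp only [qProd_succ, prod_mul_distrib, h1, h2, h3, h4, h5, h6]
    linear_combination (1 - (y ^ 5) ^ (5 * n + 1)) * (1 - (y ^ 5) ^ (5 * n + 1 + 1)) *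
      (1 - (y ^ 5) ^ (5 * n + 1 + 1 + 1)) * (1 - (y ^ 5) ^ (5 * n + 1 + 1 + 1 + 1)) *
      (1 - (y ^ 5) ^ (n + 1)) ^ 5 * (1 - (y ^ 25) ^ (n + 1)) * ih

end FiniteProduct

section RootsOfUnity

theorem map_pentagonalSeries_sub_qProd_dvd {R : Type*} [CommRing R] (φ : R⟦X⟧ →+* R⟦X⟧)
    (hφ : X ∣ φ X) {m n : ℕ} (h : m ≤ n) :
    X ^ (m + 1) ∣ φ (pentagonalSeries R) - qProd (φ X) n := by
  have h1 := map_dvd φ (X_pow_dvd_pentagonalSeries_sub_qProd R h)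
  rw [map_sub, map_pow] at h1
  have h2 : φ (qProd X n) = qProd (φ X) n := by simp [qProd]
  exact h2 ▸ (pow_dvd_pow_of_dvd hφ _).trans h1

theorem prod_rescale_pentagonalSeries_mul_expand {R : Type*} [CommRing R] {z : R}
    (hz : 1 + z + z ^ 2 + z ^ 3 + z ^ 4 = 0) :
    (∏ i ∈ range 5, rescale (z ^ i) (pentagonalSeries R)) *
      expand 25 (by norm_num) (pentagonalSeries R) =
        expand 5 (by norm_num) (pentagonalSeries R) ^ 6 := by
  have key (m : ℕ) : X ^ (m + 1) ∣ (∏ i ∈ range 5, rescale (z ^ i) (pentagonalSeries R)) *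
      expand 25 (by norm_num) (pentagonalSeries R) -
        expand 5 (by norm_num) (pentagonalSeries R) ^ 6 := by
    let π := Ideal.Quotient.mk (Ideal.span {(X : R⟦X⟧) ^ (m + 1)})
    have hπ (φ : R⟦X⟧ →+* R⟦X⟧) (hφ : X ∣ φ X) {n : ℕ} (h : m ≤ n) :
        π (φ (pentagonalSeries R)) = π (qProd (φ X) n) := by
      rw [Ideal.Quotient.eq, Ideal.mem_span_singleton]
      exact map_pentagonalSeries_sub_qProd_dvd φ hφ h
    have h1 (i : ℕ) := hπ (rescale (z ^ i)) (by simp [rescale_X]) (show m ≤ 5 * m by omega)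
    have h2 := hπ (expand (R := R) 25 (by norm_num)) (by simp [expand_X]) le_rfl
    have h3 := hπ (expand (R := R) 5 (by norm_num)) (by simp [expand_X]) le_rfl
    have h4 := hπ (expand (R := R) 5 (by norm_num)) (by simp [expand_X])
      (show m ≤ 5 * m by omega)
    simp only [RingHom.coe_coe, expand_X] at h2 h3 h4
    rw [← Ideal.mem_span_singleton, ← Ideal.Quotient.eq]
    change π _ = π _
    have hz' : 1 + C z + C z ^ 2 + C z ^ 3 + C z ^ 4 = (0 : R⟦X⟧) := by
      simpa using congrArg (C : R →+* R⟦X⟧) hz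
    have h5 := congrArg π (prod_qProd_mul_qProd hz' X m)
    simp only [map_mul, map_prod, map_pow] at h5 ⊢
    rw [pow_succ' _ 5, h2]
    nth_rw 1 [h4]
    rw [h3, ← h5]
    congr 1
    refine prod_congr rfl fun i _ ↦ ?_
    rw [h1, rescale_X, map_pow]
  rw [← sub_eq_zero]
  ext n
  exact X_pow_dvd_iff.mp (key n) n (Nat.lt_succ_self n)

theorem prod_rescale_pentagonalSeries {z : ℂ} (hz : 1 + z + z ^ 2 + z ^ 3 + z ^ 4 = 0) :
    ∏ i ∈ range 5, rescale (z ^ i) (pentagonalSeries ℂ) =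
      residuePart (0 : ZMod 5) (pentagonalSeries ℂ) ^ 5 +
      residuePart (2 : ZMod 5) (pentagonalSeries ℂ) ^ 5 +
      11 * residuePart (1 : ZMod 5) (pentagonalSeries ℂ) ^ 5 := by
  have h5 : z ^ 5 = 1 := by linear_combination (z - 1) * hz
  have hz' : 1 + C z + C z ^ 2 + C z ^ 3 + C z ^ 4 = (0 : ℂ⟦X⟧) := by
    simpa using congrArg (C : ℂ →+* ℂ⟦X⟧) hz
  have hE := pentagonalSeries_eq_add_residuePart ℂ
  have hab := residuePart_zero_mul_residuePart_two
  have ha := supportedOnResidue_residuePart (0 : ZMod 5) (pentagonalSeries ℂ)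
  have hc := supportedOnResidue_residuePart (1 : ZMod 5) (pentagonalSeries ℂ)
  have hb := supportedOnResidue_residuePart (2 : ZMod 5) (pentagonalSeries ℂ)
  set a := residuePart (0 : ZMod 5) (pentagonalSeries ℂ)
  set c := residuePart (1 : ZMod 5) (pentagonalSeries ℂ)
  set b := residuePart (2 : ZMod 5) (pentagonalSeries ℂ)
  have h (i : ℕ) : rescale (z ^ i) (pentagonalSeries ℂ) = a + C z ^ i * c + (C z ^ i) ^ 2 * b := by
    have hi : (z ^ i) ^ 5 = 1 := by rw [← pow_mul, mul_comm, pow_mul, h5, one_pow]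
    rw [hE, map_add, map_add,
      SupportedOnResidue.rescale_eq hi (k := 0) (by simpa using ha),
      SupportedOnResidue.rescale_eq hi (k := 1) (by simpa using hc),
      SupportedOnResidue.rescale_eq hi (k := 2) (by simpa using hb)]
    simp
  rw [prod_congr rfl fun i _ ↦ h i, prod_range_five_add hz']
  linear_combination (5 * c * (a * b - 2 * c ^ 2)) * hab

end RootsOfUnity

section PartitionSeries

variable (R : Type*) [CommRing R]

/-- The generating function of the number of partitions. -/
noncomputable def partitionSeries : R⟦X⟧ :=
  PowerSeries.mk fun n ↦ (Fintype.card (Nat.Partition n) : R)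

theorem coeff_partitionSeries (n : ℕ) :
    (partitionSeries R).coeff n = (Fintype.card (Nat.Partition n) : R) :=
  coeff_mk _ _

open PowerSeries.WithPiTopology in
theorem hasProd_partitionSeries [TopologicalSpace R] [IsTopologicalSemiring R] [T2Space R] :
    HasProd (fun i ↦ ∑' j : ℕ, (X : R⟦X⟧) ^ ((i + 1) * j)) (partitionSeries R) := by
  have h := Nat.Partition.hasProd_powerSeriesMk_card_restricted R fun _ ↦ True
  simpa [Nat.Partition.restricted, partitionSeries] using h

open PowerSeries.WithPiTopology in
theorem partitionSeries_mul_pentagonalSeries : partitionSeries R * pentagonalSeries R = 1 := by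
  let _ : TopologicalSpace R := ⊥
  have : DiscreteTopology R := ⟨rfl⟩
  have h := (hasProd_partitionSeries R).mul (hasProd_one_sub_X_pow R)
  have h1 (i : ℕ) : (∑' j : ℕ, (X : R⟦X⟧) ^ ((i + 1) * j)) * (1 - X ^ (i + 1)) = 1 := by
    simp_rw [pow_mul]
    exact tsum_pow_mul_one_sub_of_constantCoeff_eq_zero (by simp)
  simp only [h1] at h
  exact h.unique hasProd_one

/-- The generating function of `p (5 n + 4)`. -/
noncomputable def partitionFiveSeries : R⟦X⟧ :=
  PowerSeries.mk fun n ↦ (Fintype.card (Nat.Partition (5 * n + 4)) : R)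

theorem residuePart_four_partitionSeries : residuePart (4 : ZMod 5) (partitionSeries R) =
    X ^ 4 * expand 5 (by norm_num) (partitionFiveSeries R) := by
  ext n
  rw [coeff_residuePart, coeff_partitionSeries, coeff_X_pow_mul', coeff_expand]
  have h4 : ((n : ZMod 5) = 4) ↔ n % 5 = 4 := by
    rw [show (4 : ZMod 5) = ((4 : ℕ) : ZMod 5) by rfl, ZMod.natCast_eq_natCast_iff']
  by_cases h : n % 5 = 4
  · have hn : 5 * ((n - 4) / 5) + 4 = n := by omega
    rw [if_pos (h4.mpr h), if_pos (by omega), if_pos (by omega), partitionFiveSeries, coeff_mk, hn]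
  · rw [if_neg (mt h4.mp h)]
    split_ifs <;> first | rfl | omega

end PartitionSeries

section FormalIdentity

theorem expand_injective {R : Type*} [CommRing R] {p : ℕ} (hp : p ≠ 0) :
    Function.Injective (expand (R := R) p hp) := fun F G h ↦ by
  ext n
  rw [← coeff_expand_mul p hp, h, coeff_expand_mul]

theorem SupportedOnResidue.natCast_mul {R : Type*} [CommRing R] {m : ℕ} {F : R⟦X⟧} {r : ZMod m}
    (hF : SupportedOnResidue F r) (k : ℕ) : SupportedOnResidue ((k : R⟦X⟧) * F) r := fun n hn ↦ by
  rw [← map_natCast (C : R →+* R⟦X⟧), coeff_C_mul, hF n hn, mul_zero]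

theorem residuePart_partitionSeries_mul :
    residuePart (4 : ZMod 5) (partitionSeries ℂ) *
      (residuePart (0 : ZMod 5) (pentagonalSeries ℂ) ^ 5 +
      residuePart (2 : ZMod 5) (pentagonalSeries ℂ) ^ 5 +
      11 * residuePart (1 : ZMod 5) (pentagonalSeries ℂ) ^ 5) =
    5 * residuePart (1 : ZMod 5) (pentagonalSeries ℂ) ^ 4 := by
  have hE := pentagonalSeries_eq_add_residuePart ℂ
  have hab := residuePart_zero_mul_residuePart_two
  have hP := partitionSeries_mul_pentagonalSeries ℂ
  have ha := supportedOnResidue_residuePart (0 : ZMod 5) (pentagonalSeries ℂ)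
  have hc := supportedOnResidue_residuePart (1 : ZMod 5) (pentagonalSeries ℂ)
  have hb := supportedOnResidue_residuePart (2 : ZMod 5) (pentagonalSeries ℂ)
  set a := residuePart (0 : ZMod 5) (pentagonalSeries ℂ)
  set c := residuePart (1 : ZMod 5) (pentagonalSeries ℂ)
  set b := residuePart (2 : ZMod 5) (pentagonalSeries ℂ)
  set P := partitionSeries ℂ
  have hN : P * (a ^ 5 + b ^ 5 + 11 * c ^ 5) = a ^ 4 - a ^ 3 * c + (2 : ℕ) * (a ^ 2 * c ^ 2) -
      (3 : ℕ) * (a * c ^ 3) + (5 : ℕ) * c ^ 4 - (3 : ℕ) * (b * c ^ 3) + (2 : ℕ) * (b ^ 2 * c ^ 2) -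
      b ^ 3 * c + b ^ 4 := by
    rw [hE] at hP
    push_cast
    linear_combination (a ^ 4 - a ^ 3 * c + 2 * a ^ 2 * c ^ 2 - 3 * a * c ^ 3 + 5 * c ^ 4 -
      3 * b * c ^ 3 + 2 * b ^ 2 * c ^ 2 - b ^ 3 * c + b ^ 4) * hP - P * (a ^ 3 + b ^ 3 -
      a ^ 2 * c - b ^ 2 * c + 2 * a * c ^ 2 + 2 * b * c ^ 2 - 6 * c ^ 3) * hab
  have hNs : SupportedOnResidue (a ^ 5 + b ^ 5 + 11 * c ^ 5) (0 : ZMod 5) := by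
    have h11 : (11 : ℂ⟦X⟧) = ((11 : ℕ) : ℂ⟦X⟧) := by norm_num
    rw [h11]
    intro n hn
    rw [map_add, map_add, ha.pow 5 n (by simpa using hn),
      hb.pow 5 n (by rwa [show ((5 : ℕ) : ZMod 5) * 2 = 0 by decide]),
      (hc.pow 5).natCast_mul 11 n (by rwa [show ((5 : ℕ) : ZMod 5) * 1 = 0 by decide])]
    simp
  have h := hNs.residuePart_mul P 4
  rw [sub_zero] at h
  rw [← h, hN]
  simp only [map_add, map_sub]
  rw [(ha.pow 4).residuePart_eq_zero (by decide),
    ((ha.pow 3).mul hc).residuePart_eq_zero (by decide),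
    (((ha.pow 2).mul (hc.pow 2)).natCast_mul 2).residuePart_eq_zero (by decide),
    ((ha.mul (hc.pow 3)).natCast_mul 3).residuePart_eq_zero (by decide),
    ((hc.pow 4).natCast_mul 5).residuePart_eq (by decide),
    ((hb.mul (hc.pow 3)).natCast_mul 3).residuePart_eq_zero (by decide),
    (((hb.pow 2).mul (hc.pow 2)).natCast_mul 2).residuePart_eq_zero (by decide),
    ((hb.pow 3).mul hc).residuePart_eq_zero (by decide),
    (hb.pow 4).residuePart_eq_zero (by decide)]
  push_cast
  ring

theorem partitionFiveSeries_eq : partitionFiveSeries ℂ =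
    5 * expand 5 (by norm_num) (pentagonalSeries ℂ) ^ 5 * partitionSeries ℂ ^ 6 := by
  have hz : ∃ z : ℂ, 1 + z + z ^ 2 + z ^ 3 + z ^ 4 = 0 := by
    have h := (Complex.isPrimitiveRoot_exp 5 (by norm_num)).geom_sum_eq_zero (by norm_num)
    simp only [sum_range_succ, sum_range_zero] at h
    exact ⟨_, by linear_combination h⟩
  obtain ⟨z, hz⟩ := hz
  have h1 := prod_rescale_pentagonalSeries_mul_expand hz
  have h2 := residuePart_partitionSeries_mul
  rw [← prod_rescale_pentagonalSeries hz, residuePart_one_pentagonalSeries,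
    residuePart_four_partitionSeries] at h2
  have h3 : expand (R := ℂ) 25 (by norm_num) (pentagonalSeries ℂ) =
      expand 5 (by norm_num) (expand 5 (by norm_num) (pentagonalSeries ℂ)) := by
    rw [← expand_mul]
  have h4 : X ^ 4 * expand 5 (by norm_num) (partitionFiveSeries ℂ * pentagonalSeries ℂ ^ 6) =
      X ^ 4 * expand 5 (by norm_num)
        (5 * expand 5 (by norm_num) (pentagonalSeries ℂ) ^ 5) := by
    simp only [map_mul, map_pow, map_ofNat, ← h3, ← h1]
    linear_combination expand 25 (by norm_num) (pentagonalSeries ℂ) * h2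
  have h5 := expand_injective _ (mul_left_cancel₀ (pow_ne_zero 4 X_ne_zero) h4)
  have h6 := congrArg (· ^ 6) (partitionSeries_mul_pentagonalSeries ℂ)
  simp only [mul_pow, one_pow] at h6
  linear_combination (partitionSeries ℂ ^ 6) * h5 - partitionFiveSeries ℂ * h6

end FormalIdentity

section Evaluation

variable {𝕜 : Type*} [RCLike 𝕜]

/-- The power series `F` converges to `v` at the point `q`. -/
def HasValueAt (F : 𝕜⟦X⟧) (q v : 𝕜) : Prop := HasSum (fun n ↦ F.coeff n * q ^ n) v

namespace HasValueAt

variable {F G : 𝕜⟦X⟧} {q v w : 𝕜}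

theorem one : HasValueAt 1 q 1 := by
  have h := hasSum_single (f := fun n ↦ (1 : 𝕜⟦X⟧).coeff n * q ^ n) 0
    fun n hn ↦ by simp [coeff_one, hn]
  simpa [HasValueAt] using h

theorem X_pow (k : ℕ) : HasValueAt (X ^ k) q (q ^ k) := by
  have h := hasSum_single (f := fun n ↦ ((X : 𝕜⟦X⟧) ^ k).coeff n * q ^ n) k
    fun n hn ↦ by simp [coeff_X_pow, hn]
  simpa [HasValueAt, coeff_X_pow] using h

theorem sub (hF : HasValueAt F q v) (hG : HasValueAt G q w) : HasValueAt (F - G) q (v - w) := by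
  simpa [HasValueAt, sub_mul] using HasSum.sub hF hG

theorem natCast_mul (hF : HasValueAt F q v) (k : ℕ) : HasValueAt ((k : 𝕜⟦X⟧) * F) q (k * v) := by
  have h := HasSum.mul_left (k : 𝕜) hF
  rw [HasValueAt]
  convert! h using 2 with n
  rw [← map_natCast (C : 𝕜 →+* 𝕜⟦X⟧), coeff_C_mul, mul_assoc]

theorem mul (hF : HasValueAt F q v) (hG : HasValueAt G q w) : HasValueAt (F * G) q (v * w) := by
  have hFn := hF.summable.norm
  have hGn := hG.summable.norm
  have h := (summable_norm_sum_mul_antidiagonal_of_summable_norm hFn hGn).of_norm.hasSum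
  rw [← tsum_mul_tsum_eq_tsum_sum_antidiagonal_of_summable_norm hFn hGn, hF.tsum_eq,
    hG.tsum_eq] at h
  rw [HasValueAt]
  convert! h using 2 with n
  rw [coeff_mul, sum_mul]
  refine sum_congr rfl fun p hp ↦ ?_
  rw [← HasAntidiagonal.mem_antidiagonal.mp hp, pow_add]
  ring

theorem pow (hF : HasValueAt F q v) (k : ℕ) : HasValueAt (F ^ k) q (v ^ k) := by
  induction k with
  | zero => simpa using one
  | succ k ih => simpa only [pow_succ] using ih.mul hF

theorem expand {p : ℕ} (hp : p ≠ 0) (hF : HasValueAt F (q ^ p) v) :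
    HasValueAt (PowerSeries.expand p hp F) q v := by
  refine ((mul_right_injective₀ hp).hasSum_iff fun n hn ↦ ?_).mp ?_
  · rw [coeff_expand_of_not_dvd, zero_mul]
    rintro ⟨k, rfl⟩
    exact hn ⟨k, rfl⟩
  · simpa [HasValueAt, Function.comp_def, coeff_expand_mul, pow_mul] using hF

theorem qProd (q : 𝕜) (n : ℕ) : HasValueAt (qProd X n) q (qProd q n) := by
  induction n with
  | zero => simpa [_root_.qProd] using one
  | succ n ih =>
    rw [qProd_succ, qProd_succ]
    exact ih.mul (one.sub (X_pow _))

end HasValueAt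

end Evaluation

section Majorant

/-- The generating function of the partitions with parts at most `n`. -/
noncomputable def boundedPartitionSeries (n : ℕ) : ℝ⟦X⟧ :=
  ∏ i ∈ range n, expand (i + 1) i.succ_ne_zero (PowerSeries.mk 1)

theorem boundedPartitionSeries_mul_qProd (n : ℕ) : boundedPartitionSeries n * qProd X n = 1 := by
  rw [boundedPartitionSeries, qProd, ← prod_mul_distrib]
  refine prod_eq_one fun i _ ↦ ?_
  have h := congrArg (expand (i + 1) i.succ_ne_zero) (mk_one_mul_one_sub_eq_one ℝ)
  simpa [expand_X] using h

theorem coeff_boundedPartitionSeries {m n : ℕ} (h : m ≤ n) :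
    (boundedPartitionSeries n).coeff m = Fintype.card (Nat.Partition m) := by
  have h1 : boundedPartitionSeries n - partitionSeries ℝ =
      partitionSeries ℝ * boundedPartitionSeries n * (pentagonalSeries ℝ - qProd X n) := by
    linear_combination partitionSeries ℝ * boundedPartitionSeries_mul_qProd n -
      boundedPartitionSeries n * partitionSeries_mul_pentagonalSeries ℝ
  have h2 := X_pow_dvd_iff.mp (h1 ▸ (X_pow_dvd_pentagonalSeries_sub_qProd ℝ h).mul_left _) m
    (Nat.lt_succ_self m)
  rw [← coeff_partitionSeries, ← sub_eq_zero, ← map_sub, h2]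

theorem hasValueAt_boundedPartitionSeries {r : ℝ} (h0 : 0 ≤ r) (h1 : r < 1) (n : ℕ) :
    HasValueAt (boundedPartitionSeries n) r (qProd r n)⁻¹ := by
  induction n with
  | zero => simpa [boundedPartitionSeries, qProd] using HasValueAt.one
  | succ n ih =>
    rw [boundedPartitionSeries, prod_range_succ, qProd_succ, mul_inv]
    refine ih.mul (HasValueAt.expand _ ?_)
    simpa [HasValueAt] using hasSum_geometric_of_lt_one (pow_nonneg h0 (n + 1))
      (pow_lt_one₀ h0 h1 n.succ_ne_zero)

variable {𝕜 : Type*} [NormedField 𝕜]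

theorem norm_coeff_mul_le {F F' : 𝕜⟦X⟧} {G G' : ℝ⟦X⟧} (h : ∀ n, ‖F.coeff n‖ ≤ G.coeff n)
    (h' : ∀ n, ‖F'.coeff n‖ ≤ G'.coeff n) (n : ℕ) : ‖(F * F').coeff n‖ ≤ (G * G').coeff n := by
  rw [coeff_mul, coeff_mul]
  refine norm_sum_le_of_le _ fun p _ ↦ ?_
  rw [norm_mul]
  exact mul_le_mul (h _) (h' _) (norm_nonneg _) ((norm_nonneg _).trans (h _))

theorem norm_coeff_one_sub_X_pow_le (k n : ℕ) : ‖((1 : 𝕜⟦X⟧) - X ^ (k + 1)).coeff n‖ ≤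
    (expand (k + 1) k.succ_ne_zero (PowerSeries.mk 1) : ℝ⟦X⟧).coeff n := by
  rw [map_sub, coeff_one, coeff_X_pow, coeff_expand]
  rcases eq_or_ne n 0 with rfl | h0
  · simp
  rcases eq_or_ne n (k + 1) with rfl | h1
  · simp
  · rw [if_neg h0, if_neg h1]
    split_ifs <;> simp

theorem norm_coeff_one_le (k n : ℕ) : ‖(1 : 𝕜⟦X⟧).coeff n‖ ≤
    (expand (k + 1) k.succ_ne_zero (PowerSeries.mk 1) : ℝ⟦X⟧).coeff n := by
  rw [coeff_one, coeff_expand]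
  rcases eq_or_ne n 0 with rfl | h0
  · simp
  · rw [if_neg h0]
    split_ifs <;> simp

theorem norm_coeff_qProd_le_boundedPartitionSeries (n m : ℕ) :
    ‖(qProd (X : 𝕜⟦X⟧) n).coeff m‖ ≤ (boundedPartitionSeries n).coeff m := by
  induction n generalizing m with
  | zero =>
    simp only [qProd, boundedPartitionSeries, range_zero, prod_empty, coeff_one]
    split_ifs <;> simp
  | succ n ih =>
    rw [qProd_succ, boundedPartitionSeries, prod_range_succ]
    exact norm_coeff_mul_le ih (norm_coeff_one_sub_X_pow_le n) m

theorem coeff_boundedPartitionSeries_nonneg (n m : ℕ) :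
    0 ≤ (boundedPartitionSeries n).coeff m :=
  (norm_nonneg _).trans (norm_coeff_qProd_le_boundedPartitionSeries (𝕜 := ℝ) n m)

theorem coeff_boundedPartitionSeries_le (n m : ℕ) :
    (boundedPartitionSeries n).coeff m ≤ Fintype.card (Nat.Partition m) := by
  have hmono : Monotone fun n ↦ (boundedPartitionSeries n).coeff m := by
    refine monotone_nat_of_le_succ fun n ↦ ?_
    have h := norm_coeff_mul_le (F := boundedPartitionSeries n) (F' := (1 : ℝ⟦X⟧))
      (fun m ↦ (abs_of_nonneg (coeff_boundedPartitionSeries_nonneg n m)).le)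
      (norm_coeff_one_le n) m
    rw [mul_one, Real.norm_of_nonneg (coeff_boundedPartitionSeries_nonneg n m)] at h
    simpa only [boundedPartitionSeries, prod_range_succ] using h
  exact (hmono (le_max_left n m)).trans (coeff_boundedPartitionSeries (le_max_right n m)).le

end Majorant

section Convergence

open Filter Topology

theorem tendsto_qProd {𝕜 : Type*} [RCLike 𝕜] {q : 𝕜} (hq : ‖q‖ < 1) :
    Tendsto (qProd q) atTop (𝓝 (∏' n : ℕ, (1 - q ^ (n + 1)))) := by
  have h : Multipliable fun n : ℕ ↦ 1 - q ^ (n + 1) := by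
    simp_rw [sub_eq_add_neg]
    refine multipliable_one_add_of_summable ?_
    simpa using (summable_nat_add_iff 1).mpr (summable_geometric_of_lt_one (norm_nonneg _) hq)
  exact h.hasProd.tendsto_prod_nat

theorem tprod_one_sub_pow_ne_zero {𝕜 : Type*} [RCLike 𝕜] {q : 𝕜} (hq : ‖q‖ < 1) :
    ∏' n : ℕ, (1 - q ^ (n + 1)) ≠ 0 := by
  simp_rw [sub_eq_add_neg]
  refine tprod_one_add_ne_zero_of_summable (fun n h ↦ ?_) ?_
  · have h1 : q ^ (n + 1) = 1 := (add_neg_eq_zero.mp h).symm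
    have h2 := pow_lt_one₀ (norm_nonneg q) hq n.succ_ne_zero
    rw [← norm_pow, h1, norm_one] at h2
    exact lt_irrefl _ h2
  · simpa using (summable_nat_add_iff 1).mpr (summable_geometric_of_lt_one (norm_nonneg _) hq)

theorem summable_card_partition_mul_pow {r : ℝ} (h0 : 0 ≤ r) (h1 : r < 1) :
    Summable fun n ↦ (Fintype.card (Nat.Partition n) : ℝ) * r ^ n := by
  have hr : ‖r‖ < 1 := by rwa [Real.norm_of_nonneg h0]
  obtain ⟨c, hc⟩ := ((tendsto_qProd hr).inv₀ (tprod_one_sub_pow_ne_zero hr)).bddAbove_range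
  refine summable_of_sum_range_le (c := c) (fun n ↦ by positivity) fun n ↦ ?_
  calc _ = ∑ i ∈ range n, (boundedPartitionSeries n).coeff i * r ^ i :=
        sum_congr rfl fun i hi ↦ by rw [coeff_boundedPartitionSeries (mem_range.mp hi).le]
    _ ≤ (qProd r n)⁻¹ := sum_le_hasSum _
        (fun i _ ↦ mul_nonneg (coeff_boundedPartitionSeries_nonneg n i) (pow_nonneg h0 i))
        (hasValueAt_boundedPartitionSeries h0 h1 n)
    _ ≤ c := hc ⟨n, rfl⟩

theorem hasValueAt_pentagonalSeries {q : ℂ} (hq : ‖q‖ < 1) :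
    HasValueAt (pentagonalSeries ℂ) q (∏' n : ℕ, (1 - q ^ (n + 1))) := by
  have hs := summable_card_partition_mul_pow (norm_nonneg q) hq
  have hb (n m : ℕ) : ‖(qProd (X : ℂ⟦X⟧) n).coeff m‖ ≤ Fintype.card (Nat.Partition m) :=
    (norm_coeff_qProd_le_boundedPartitionSeries n m).trans (coeff_boundedPartitionSeries_le n m)
  have he {n m : ℕ} (h : m ≤ n) :
      (qProd (X : ℂ⟦X⟧) n).coeff m = (pentagonalSeries ℂ).coeff m := by
    rw [eq_comm, ← sub_eq_zero, ← map_sub]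
    exact X_pow_dvd_iff.mp (X_pow_dvd_pentagonalSeries_sub_qProd ℂ h) m (Nat.lt_succ_self m)
  have hb' (n m : ℕ) : ‖(qProd (X : ℂ⟦X⟧) n).coeff m * q ^ m‖ ≤
      Fintype.card (Nat.Partition m) * ‖q‖ ^ m := by
    rw [norm_mul, norm_pow]
    exact mul_le_mul_of_nonneg_right (hb n m) (by positivity)
  have h := tendsto_tsum_of_dominated_convergence hs
    (f := fun n m ↦ (qProd (X : ℂ⟦X⟧) n).coeff m * q ^ m)
    (g := fun m ↦ (pentagonalSeries ℂ).coeff m * q ^ m)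
    (fun m ↦ tendsto_atTop_of_eventually_const fun n (hn : m ≤ n) ↦ by rw [he hn])
    (.of_forall fun n m ↦ hb' n m)
  simp_rw [(HasValueAt.qProd q _).tsum_eq] at h
  rw [← tendsto_nhds_unique h (tendsto_qProd hq)]
  exact (Summable.of_norm_bounded hs fun m ↦ he (le_refl m) ▸ hb' m m).hasSum

theorem hasValueAt_partitionSeries {q : ℂ} (hq : ‖q‖ < 1) :
    HasValueAt (partitionSeries ℂ) q (∏' n : ℕ, (1 - q ^ (n + 1)))⁻¹ := by
  have hs : Summable fun n ↦ (partitionSeries ℂ).coeff n * q ^ n :=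
    Summable.of_norm_bounded (summable_card_partition_mul_pow (norm_nonneg q) hq) fun n ↦ by
      simp [coeff_partitionSeries]
  have h : HasValueAt (partitionSeries ℂ) q (∑' n, (partitionSeries ℂ).coeff n * q ^ n) :=
    hs.hasSum
  have h1 := h.mul (hasValueAt_pentagonalSeries hq)
  rw [partitionSeries_mul_pentagonalSeries] at h1
  rwa [eq_inv_of_mul_eq_one_left (h1.unique HasValueAt.one)] at h

end Convergence

end PowerSeriesIdentities

/-- Ramanujan's "most beautiful" identity:
`∑_{n ≥ 0} p(5n+4) qⁿ = 5 (q⁵;q⁵)_∞⁵ / (q;q)_∞⁶`, where `p(n)` is the number of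
partitions of `n` (stated for `|q| < 1`). -/
theorem ramanujan_partition_mod5 (q : ℂ) (hq : ‖q‖ < 1) :
    ∑' n : ℕ, (Fintype.card (Nat.Partition (5 * n + 4)) : ℂ) * q ^ n
      = 5 * (∏' n : ℕ, (1 - (q ^ 5) ^ (n + 1))) ^ 5 / (∏' n : ℕ, (1 - q ^ (n + 1))) ^ 6 := by
  have hq5 : ‖q ^ 5‖ < 1 := by
    rw [norm_pow]
    exact pow_lt_one₀ (norm_nonneg q) hq (by norm_num)
  have h := ((((hasValueAt_pentagonalSeries hq5).expand (by norm_num)).pow 5).natCast_mul 5).mul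
    ((hasValueAt_partitionSeries hq).pow 6)
  rw [Nat.cast_ofNat, ← partitionFiveSeries_eq, inv_pow, ← div_eq_mul_inv] at h
  simpa [partitionFiveSeries] using h.tsum_eq
end

section
/- Let L₁(q) = ∏_{n≥0} 1/((1-q^{5n+2})(1-q^{5n+3})), with coefficients a(n), so a(n) counts partitions of n into parts ≡ ±2 mod 5. Then L₁ satisfies the ODE (q d/dq)² F + (1/5 + 4∑_{n≥1}σ₁(n)q^n)(q d/dq) F + (11/15)·∑_{n≥1}(σ₁(n) - σ₃(n))q^n · F = 0. -/
open scoped BigOperators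

namespace RogersRamanujan

/-- Positive solutions `((a, b), (x, y))` of `a * x + b * y = n`. -/
def bilinearSolutions (n : ℕ) : Finset ((ℕ × ℕ) × (ℕ × ℕ)) :=
  ((Finset.Icc 1 n ×ˢ Finset.Icc 1 n) ×ˢ (Finset.Icc 1 n ×ˢ Finset.Icc 1 n)).filter
    fun p => p.1.1 * p.2.1 + p.1.2 * p.2.2 = n

lemma mem_bilinearSolutions {n a b x y : ℕ} :
    ((a, b), (x, y)) ∈ bilinearSolutions n ↔
      0 < a ∧ 0 < b ∧ 0 < x ∧ 0 < y ∧ a * x + b * y = n := by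
  simp only [bilinearSolutions, Finset.mem_filter, Finset.mem_product, Finset.mem_Icc]
  constructor
  · rintro ⟨⟨⟨⟨ha, -⟩, hb, -⟩, ⟨hx, -⟩, hy, -⟩, h⟩
    exact ⟨ha, hb, hx, hy, h⟩
  · rintro ⟨ha, hb, hx, hy, h⟩
    have h1 := Nat.le_mul_of_pos_right a hx
    have h2 := Nat.le_mul_of_pos_right b hy
    have h3 := Nat.le_mul_of_pos_left x ha
    have h4 := Nat.le_mul_of_pos_left y hb
    refine ⟨⟨⟨⟨ha, ?_⟩, hb, ?_⟩, ⟨hx, ?_⟩, hy, ?_⟩, h⟩ <;> omega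

lemma sum_bilinearSolutions_swap (n : ℕ) (f : (ℕ × ℕ) × (ℕ × ℕ) → ℤ) :
    ∑ p ∈ bilinearSolutions n, f p = ∑ p ∈ bilinearSolutions n, f (p.1.swap, p.2.swap) := by
  refine Finset.sum_nbij' (fun p => (p.1.swap, p.2.swap)) (fun p => (p.1.swap, p.2.swap))
    ?_ ?_ ?_ ?_ ?_ <;>
  · rintro ⟨⟨a, b⟩, x, y⟩
    simp +contextual [mem_bilinearSolutions, add_comm]

lemma sum_bilinearSolutions_transpose (n : ℕ) (f : (ℕ × ℕ) × (ℕ × ℕ) → ℤ) :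
    ∑ p ∈ bilinearSolutions n, f p = ∑ p ∈ bilinearSolutions n, f p.swap := by
  refine Finset.sum_nbij' Prod.swap Prod.swap ?_ ?_ ?_ ?_ ?_ <;>
  · rintro ⟨⟨a, b⟩, x, y⟩
    simp +contextual [mem_bilinearSolutions, mul_comm]

/-- The substitution `(a, b, x, y) ↦ (a - b, b, x, x + y)`. -/
lemma sum_bilinearSolutions_shear (n : ℕ) (f : ℕ → ℕ → ℤ) :
    ∑ p ∈ bilinearSolutions n with p.1.2 < p.1.1, f p.1.1 p.1.2 =
      ∑ p ∈ bilinearSolutions n with p.2.1 < p.2.2, f (p.1.1 + p.1.2) p.1.2 := by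
  refine Finset.sum_nbij' (fun p => ((p.1.1 - p.1.2, p.1.2), (p.2.1, p.2.1 + p.2.2)))
    (fun p => ((p.1.1 + p.1.2, p.1.2), (p.2.1, p.2.2 - p.2.1))) ?_ ?_ ?_ ?_ ?_
  · rintro ⟨⟨a, b⟩, x, y⟩ h
    simp only [Finset.mem_filter, mem_bilinearSolutions] at h ⊢
    obtain ⟨⟨ha, hb, hx, hy, h⟩, hab⟩ := h
    obtain ⟨c, rfl⟩ := Nat.exists_eq_add_of_lt hab
    refine ⟨⟨by omega, hb, hx, by omega, ?_⟩, by omega⟩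
    rw [show b + c + 1 - b = c + 1 by omega, ← h]
    ring
  · rintro ⟨⟨a, b⟩, x, y⟩ h
    simp only [Finset.mem_filter, mem_bilinearSolutions] at h ⊢
    obtain ⟨⟨ha, hb, hx, hy, h⟩, hxy⟩ := h
    obtain ⟨c, rfl⟩ := Nat.exists_eq_add_of_lt hxy
    refine ⟨⟨by omega, hb, hx, by omega, ?_⟩, by omega⟩
    rw [show x + c + 1 - x = c + 1 by omega, ← h]
    ring
  · rintro ⟨⟨a, b⟩, x, y⟩ h
    exact Prod.ext (Prod.ext (Nat.sub_add_cancel (Finset.mem_filter.1 h).2.le) rfl)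
      (Prod.ext rfl (Nat.add_sub_cancel_left x y))
  · rintro ⟨⟨a, b⟩, x, y⟩ h
    exact Prod.ext (Prod.ext (Nat.add_sub_cancel a b) rfl)
      (Prod.ext rfl (Nat.add_sub_cancel' (Finset.mem_filter.1 h).2.le))
  · rintro ⟨⟨a, b⟩, x, y⟩ h
    simp only [Finset.mem_filter] at h
    simp only [Nat.sub_add_cancel h.2.le]

lemma sum_eq_sum_trichotomy {ι : Type*} (s : Finset ι) (u v : ι → ℕ) (f : ι → ℤ) :
    ∑ p ∈ s, f p = ∑ p ∈ s with u p = v p, f p + ∑ p ∈ s with u p < v p, f p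
      + ∑ p ∈ s with v p < u p, f p := by
  simp only [Finset.sum_filter, ← Finset.sum_add_distrib]
  refine Finset.sum_congr rfl fun p _ => ?_
  rcases lt_trichotomy (u p) (v p) with h | h | h
  · simp [h, h.ne, h.not_gt]
  · simp [h]
  · simp [h, h.ne', h.not_gt]

/-- A Liouville-type identity for functions with the symmetries of the hexagonal lattice
`{(a, b, c) | a + b + c = 0}`. -/
theorem sum_bilinearSolutions_hexagonal (n : ℕ) (Φ : ℤ → ℤ → ℤ)
    (hswap : ∀ a b, Φ b a = Φ a b) (hneg : ∀ a b, Φ (-a) (-b) = Φ a b)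
    (hrot : ∀ a b, Φ a (-a - b) = Φ a b) :
    ∑ p ∈ bilinearSolutions n, (Φ p.1.1 (-p.1.2) - Φ p.1.1 p.1.2) =
      ∑ p ∈ bilinearSolutions n with p.1.1 = p.1.2, Φ p.1.1 (-p.1.2)
        - ∑ p ∈ bilinearSolutions n with p.2.1 = p.2.2, Φ p.1.1 p.1.2 := by
  have hswap' : ∀ a b, Φ b (-a) = Φ a (-b) := fun a b => by
    rw [hswap, ← hneg, neg_neg]
  have hshear : ∀ a b, Φ (a + b) (-b) = Φ a b := fun a b => by
    rw [hswap (-b), ← hrot, show - -b - (a + b) = -a by ring, hneg, hswap]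
  have h₁ : ∑ p ∈ bilinearSolutions n with p.1.1 < p.1.2, Φ p.1.1 (-p.1.2) =
      ∑ p ∈ bilinearSolutions n with p.1.2 < p.1.1, Φ p.1.1 (-p.1.2) := by
    simp only [Finset.sum_filter]
    rw [sum_bilinearSolutions_swap]
    simp [hswap']
  have h₂ : ∑ p ∈ bilinearSolutions n with p.2.2 < p.2.1, Φ p.1.1 p.1.2 =
      ∑ p ∈ bilinearSolutions n with p.2.1 < p.2.2, Φ p.1.1 p.1.2 := by
    simp only [Finset.sum_filter]
    rw [sum_bilinearSolutions_swap]
    simp [hswap]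
  have h₃ := sum_bilinearSolutions_shear n fun a b => Φ a (-b)
  simp only [Nat.cast_add, hshear] at h₃
  have h₄ := sum_eq_sum_trichotomy (bilinearSolutions n) (fun p => p.1.1) (fun p => p.1.2)
    fun p => Φ p.1.1 (-p.1.2)
  have h₅ := sum_eq_sum_trichotomy (bilinearSolutions n) (fun p => p.2.1) (fun p => p.2.2)
    fun p => Φ p.1.1 p.1.2
  rw [Finset.sum_sub_distrib]
  linear_combination h₄ - h₅ + h₁ - h₂ + 2 * h₃

lemma sum_bilinearSolutions_diagonal (n : ℕ) (f : ℕ → ℕ → ℕ → ℤ) :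
    ∑ p ∈ bilinearSolutions n with p.2.1 = p.2.2, f p.1.1 p.1.2 p.2.1 =
      ∑ d ∈ n.divisors, ∑ a ∈ Finset.Ico 1 d, f a (d - a) (n / d) := by
  rw [Finset.sum_sigma']
  refine Finset.sum_nbij' (fun p => ⟨p.1.1 + p.1.2, p.1.1⟩)
    (fun s => ((s.2, s.1 - s.2), (n / s.1, n / s.1))) ?_ ?_ ?_ ?_ ?_
  · rintro ⟨⟨a, b⟩, x, y⟩ h
    simp only [Finset.mem_filter, mem_bilinearSolutions] at h
    obtain ⟨⟨ha, hb, hx, hy, h⟩, rfl⟩ := h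
    simp only [Finset.mem_sigma, Nat.mem_divisors, Finset.mem_Ico]
    refine ⟨⟨⟨x, by rw [← h]; ring⟩, ?_⟩, ha, by omega⟩
    have := Nat.mul_pos ha hx
    omega
  · rintro ⟨d, a⟩ h
    simp only [Finset.mem_sigma, Nat.mem_divisors, Finset.mem_Ico] at h
    obtain ⟨⟨⟨x, rfl⟩, hn⟩, ha, had⟩ := h
    have hd : 0 < d := by omega
    simp only [Finset.mem_filter, mem_bilinearSolutions, Nat.mul_div_cancel_left x hd]
    have hx : 0 < x := Nat.pos_of_ne_zero (right_ne_zero_of_mul hn)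
    refine ⟨⟨ha, by omega, hx, hx, ?_⟩, trivial⟩
    rw [← add_mul, Nat.add_sub_cancel' had.le]
  · rintro ⟨⟨a, b⟩, x, y⟩ h
    simp only [Finset.mem_filter, mem_bilinearSolutions] at h
    obtain ⟨⟨ha, hb, hx, hy, h⟩, rfl⟩ := h
    have hx' : n / (a + b) = x :=
      Nat.div_eq_of_eq_mul_right (by omega) (by rw [← h]; ring)
    simp [hx']
  · rintro ⟨d, a⟩ h
    simp only [Finset.mem_sigma, Finset.mem_Ico] at h
    simp [Nat.add_sub_cancel' h.2.2.le]
  · rintro ⟨⟨a, b⟩, x, y⟩ h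
    simp only [Finset.mem_filter, mem_bilinearSolutions] at h
    obtain ⟨⟨ha, hb, hx, hy, h⟩, rfl⟩ := h
    have hx' : n / (a + b) = x :=
      Nat.div_eq_of_eq_mul_right (by omega) (by rw [← h]; ring)
    simp [hx']

lemma sum_bilinearSolutions_left_diagonal (n : ℕ) (g : ℕ → ℤ) :
    ∑ p ∈ bilinearSolutions n with p.1.1 = p.1.2, g p.1.1 =
      ∑ d ∈ n.divisors, ((n / d : ℕ) - 1 : ℤ) * g d := by
  have h := sum_bilinearSolutions_diagonal n fun _ _ x => g x
  rw [← Nat.sum_div_divisors n fun d => ((n / d : ℕ) - 1 : ℤ) * g d]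
  simp only [Finset.sum_filter] at h ⊢
  rw [sum_bilinearSolutions_transpose]
  simp only [Prod.fst_swap]
  rw [h]
  refine Finset.sum_congr rfl fun d hd => ?_
  have hd' := Nat.pos_of_mem_divisors hd
  rw [Nat.div_div_self (Nat.dvd_of_mem_divisors hd) (Nat.ne_zero_of_mem_divisors hd)]
  simp [Nat.cast_sub (show 1 ≤ d from hd')]

/-- Convolution of divisor sums. -/
lemma sum_antidiagonal_divisors (n : ℕ) (f g : ℕ → ℤ) :
    ∑ k ∈ Finset.HasAntidiagonal.antidiagonal n, (∑ d ∈ k.1.divisors, f d) * ∑ d ∈ k.2.divisors, g d =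
      ∑ p ∈ bilinearSolutions n, f p.1.1 * g p.1.2 := by
  simp only [Finset.sum_mul_sum, ← Finset.sum_product']
  rw [Finset.sum_sigma']
  refine Finset.sum_nbij' (fun s => (s.2, (s.1.1 / s.2.1, s.1.2 / s.2.2)))
    (fun p => ⟨(p.1.1 * p.2.1, p.1.2 * p.2.2), p.1⟩) ?_ ?_ ?_ ?_ ?_
  · rintro ⟨⟨i, j⟩, a, b⟩ h
    simp only [Finset.mem_sigma, Finset.HasAntidiagonal.mem_antidiagonal, Finset.mem_product,
      Nat.mem_divisors] at h
    obtain ⟨rfl, ⟨⟨x, rfl⟩, hi⟩, ⟨y, rfl⟩, hj⟩ := h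
    simp only [mul_ne_zero_iff, ← Nat.pos_iff_ne_zero] at hi hj
    simp [mem_bilinearSolutions, hi.1, hi.2, hj.1, hj.2]
  · rintro ⟨⟨a, b⟩, x, y⟩ h
    obtain ⟨ha, hb, hx, hy, h⟩ := mem_bilinearSolutions.1 h
    simp [h, ha.ne', hb.ne', hx.ne', hy.ne']
  · rintro ⟨⟨i, j⟩, a, b⟩ h
    simp only [Finset.mem_sigma, Finset.mem_product, Nat.mem_divisors] at h
    simp [Nat.mul_div_cancel' h.2.1.1, Nat.mul_div_cancel' h.2.2.1]
  · rintro ⟨⟨a, b⟩, x, y⟩ h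
    obtain ⟨ha, hb, hx, hy, h⟩ := mem_bilinearSolutions.1 h
    simp [ha, hb]
  · simp

/-- The indicator function of the residue classes `±2` modulo `5`. -/
def chi (r : ZMod 5) : ℤ := if r = 2 ∨ r = 3 then 1 else 0

/-- A weight modulo `5` satisfying `weight_add_weight`. -/
def weight (r s : ZMod 5) : ℤ := if r = 0 then 5 * chi s else if r = 1 ∨ r = 4 then 2 else 8

/-- A function on `{(a, b, c) | a + b + c = 0}`, invariant under permutations and negation. -/
def hexForm (a b : ℤ) : ℤ :=
  weight (a + b) a * (a * b) - weight a b * (b * (a + b)) - weight b a * (a * (a + b))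

lemma weight_neg_left : ∀ r s, weight (-r) s = weight r s := by decide
lemma weight_neg_right : ∀ r s, weight r (-s) = weight r s := by decide
lemma weight_add_right : ∀ r s, weight r (-r - s) = weight r s := by decide
lemma weight_add_left : ∀ r s, weight (r + s) r = weight (r + s) s := by decide

lemma weight_add_weight : ∀ r s, 2 * weight r s + 2 * weight s r - weight (r - s) r
    - weight (r + s) r = 5 * (chi r * chi s + 2 * chi r + 2 * chi s) := by decide

lemma hexForm_swap (a b : ℤ) : hexForm b a = hexForm a b := by
  simp only [hexForm, add_comm (b : ZMod 5), weight_add_left (a : ZMod 5)]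
  ring

lemma hexForm_neg (a b : ℤ) : hexForm (-a) (-b) = hexForm a b := by
  simp only [hexForm, Int.cast_neg, ← neg_add, weight_neg_left, weight_neg_right]
  ring

lemma hexForm_rot (a b : ℤ) : hexForm a (-a - b) = hexForm a b := by
  have h₁ := weight_add_right a b
  have h₂ : weight (-a - b) a = weight (a + b) a := by
    rw [← weight_neg_left]; congr 1; ring
  have h₃ : weight (a + (-a - b)) a = weight b a := by
    rw [← weight_neg_left]; congr 1; ring
  simp only [hexForm, Int.cast_neg, Int.cast_sub, h₁, h₂, h₃]
  ring

lemma hexForm_sub_hexForm (a b : ℤ) :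
    hexForm a (-b) - hexForm a b = 5 * (a * b * (chi a * chi b + 2 * chi a + 2 * chi b)) := by
  have h := weight_add_weight a b
  simp only [hexForm, Int.cast_neg, weight_neg_left, weight_neg_right, ← sub_eq_add_neg]
  linear_combination (a * b) * h

lemma hexForm_neg_self (a : ℤ) : hexForm a (-a) = -(5 * chi a * a ^ 2) := by
  simp only [hexForm, weight, Int.cast_neg, add_neg_cancel, if_true]
  ring

lemma sum_range_five_mul_hexForm (t : Fin 5) (d j : ℕ) (hd : d % 5 = t) :
    3 * ∑ a ∈ Finset.range (5 * j), hexForm a (d - a) =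
      ![55, -5, -20, -20, -5] t * j + ![0, 75, 300, 300, 75] t * j ^ 2
        - ![250, 250, 1000, 1000, 250] t * j ^ 3 + ![0, -45, -60, -15, 45] t * (d * j)
        + ![75, 75, 300, 300, 75] t * (d * j ^ 2)
        - ![60, 60, 75, 75, 60] t * (d ^ 2 * j) := by
  have hdt : (d : ZMod 5) = t.val := by
    rw [← hd, ZMod.natCast_mod]
  have h5 : (5 : ZMod 5) = 0 := rfl
  clear hd
  induction j with
  | zero => simp
  | succ j ih =>
    rw [mul_add, mul_one, Finset.sum_range_succ, Finset.sum_range_succ, Finset.sum_range_succ,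
      Finset.sum_range_succ, Finset.sum_range_succ]
    generalize ∑ a ∈ Finset.range (5 * j), hexForm a (d - a) = S at ih ⊢
    simp only [hexForm]
    push_cast
    simp only [hdt, h5, zero_mul, zero_add, add_sub_cancel]
    fin_cases t <;> simp +decide [weight, chi] at ih ⊢ <;> linear_combination ih

lemma sum_range_hexForm (d : ℕ) :
    3 * ∑ a ∈ Finset.range d, hexForm a (d - a) = 3 * (chi d * d) + 11 * (d - d ^ 3) := by
  have h5 : (5 : ZMod 5) = 0 := rfl
  obtain ⟨k, t, rfl⟩ : ∃ (k : ℕ) (t : Fin 5), d = 5 * k + t :=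
    ⟨d / 5, ⟨d % 5, Nat.mod_lt _ (by norm_num)⟩, (Nat.div_add_mod d 5).symm⟩
  have h := sum_range_five_mul_hexForm t (5 * k + t) k (by omega)
  rw [Finset.sum_range_add, mul_add, h]
  clear h
  fin_cases t <;>
    simp +decide [Finset.sum_range_succ, hexForm, weight, chi, h5] <;> ring

lemma three_mul_sum_Ico_hexForm (d : ℕ) :
    3 * ∑ a ∈ Finset.Ico 1 d, hexForm a ((d - a : ℕ) : ℤ) =
      15 * (chi d * d ^ 2) + 3 * (chi d * d) + 11 * (d - d ^ 3) := by
  rcases Nat.eq_zero_or_pos d with rfl | hd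
  · simp
  have h := sum_range_hexForm d
  rw [Finset.range_eq_Ico, Finset.sum_eq_sum_Ico_succ_bot hd] at h
  have h₀ : hexForm (0 : ℕ) (d - (0 : ℕ)) = -(5 * (chi d * d ^ 2)) := by
    simp [hexForm, weight]
    ring
  rw [h₀] at h
  rw [Finset.sum_congr rfl fun a ha => by
    rw [Nat.cast_sub (Finset.mem_Ico.1 ha).2.le]]
  linear_combination h

/-- The coefficients of the logarithmic derivative of the product. -/
def logCoeff (n : ℕ) : ℤ := ∑ d ∈ n.divisors, chi d * d

/-- The divisor power sum, as an integer. -/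
def divisorSum (k n : ℕ) : ℤ := ∑ d ∈ n.divisors, (d : ℤ) ^ k

/-- The Riccati equation for the logarithmic derivative, on the level of coefficients. -/
theorem logCoeff_riccati (n : ℕ) :
    15 * (n * logCoeff n)
      + 15 * ∑ k ∈ Finset.HasAntidiagonal.antidiagonal n, logCoeff k.1 * logCoeff k.2
      + 3 * logCoeff n
      + 60 * ∑ k ∈ Finset.HasAntidiagonal.antidiagonal n, divisorSum 1 k.1 * logCoeff k.2
      + 11 * (divisorSum 1 n - divisorSum 3 n) = 0 := by
  have hmain := sum_bilinearSolutions_hexagonal n hexForm hexForm_swap hexForm_neg hexForm_rot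
  simp only [hexForm_sub_hexForm, ← Finset.mul_sum] at hmain
  have hleft : ∑ p ∈ bilinearSolutions n with p.1.1 = p.1.2, hexForm p.1.1 (-p.1.2) =
      ∑ d ∈ n.divisors, (-5 * (n * (chi d * d)) + 5 * (chi d * d ^ 2)) := by
    rw [Finset.sum_congr (g := fun p => -(5 * chi p.1.1 * (p.1.1 : ℤ) ^ 2)) rfl fun p hp => by
      rw [← (Finset.mem_filter.1 hp).2, hexForm_neg_self]; simp]
    rw [sum_bilinearSolutions_left_diagonal n fun a => -(5 * chi a * (a : ℤ) ^ 2)]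
    refine Finset.sum_congr rfl fun d hd => ?_
    have h : ((n / d : ℕ) : ℤ) * d = n := by
      exact_mod_cast Nat.div_mul_cancel (Nat.dvd_of_mem_divisors hd)
    linear_combination (-5 * chi d * d) * h
  have hright : 3 * ∑ p ∈ bilinearSolutions n with p.2.1 = p.2.2, hexForm p.1.1 p.1.2 =
      ∑ d ∈ n.divisors, (15 * (chi d * d ^ 2) + 3 * (chi d * d) + 11 * (d - (d : ℤ) ^ 3)) := by
    rw [sum_bilinearSolutions_diagonal n fun a b _ => hexForm a b, Finset.mul_sum]
    exact Finset.sum_congr rfl fun d _ => three_mul_sum_Ico_hexForm d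
  have hsym : ∑ p ∈ bilinearSolutions n, (chi p.1.1 * p.1.1) * (p.1.2 : ℤ) =
      ∑ p ∈ bilinearSolutions n, (p.1.1 : ℤ) * (chi p.1.2 * p.1.2) := by
    rw [sum_bilinearSolutions_swap]
    exact Finset.sum_congr rfl fun p _ => by simp [mul_comm]
  have hhh := sum_antidiagonal_divisors n (fun d => chi d * d) fun d => chi d * d
  have hsh := sum_antidiagonal_divisors n (fun d => (d : ℤ)) fun d => chi d * d
  have hsplit : ∑ p ∈ bilinearSolutions n, ((p.1.1 : ℤ) * p.1.2
      * (chi (p.1.1 : ℤ) * chi (p.1.2 : ℤ) + 2 * chi (p.1.1 : ℤ) + 2 * chi (p.1.2 : ℤ))) =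
      ∑ p ∈ bilinearSolutions n, (chi p.1.1 * p.1.1) * (chi p.1.2 * p.1.2)
        + 2 * ∑ p ∈ bilinearSolutions n, (chi p.1.1 * p.1.1) * (p.1.2 : ℤ)
        + 2 * ∑ p ∈ bilinearSolutions n, (p.1.1 : ℤ) * (chi p.1.2 * p.1.2) := by
    simp only [Finset.mul_sum, ← Finset.sum_add_distrib]
    refine Finset.sum_congr rfl fun p _ => ?_
    push_cast
    ring
  rw [hsplit, hsym, ← hhh, ← hsh, hleft] at hmain
  simp only [logCoeff, divisorSum, pow_one]
  simp only [Finset.sum_add_distrib, Finset.sum_sub_distrib, ← Finset.mul_sum] at hmain hright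
  linear_combination 3 * hmain - hright

section PowerSeries

variable {c : ℕ → ℂ} {k : ℕ}

lemma summable_norm_mul_pow (hc : ∀ n, ‖c n‖ ≤ (n : ℝ) ^ k) {z : ℂ} (hz : ‖z‖ < 1) :
    Summable fun n => ‖c n * z ^ n‖ := by
  refine .of_nonneg_of_le (fun _ => norm_nonneg _) (fun n => ?_)
    (summable_norm_pow_mul_geometric_of_norm_lt_one k hz)
  simp only [norm_mul, norm_pow, Complex.norm_natCast]
  gcongr
  exact hc n

lemma hasDerivAt_tsum_mul_pow (hc : ∀ n, ‖c n‖ ≤ (n : ℝ) ^ k) {z : ℂ} (hz : ‖z‖ < 1) :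
    HasDerivAt (fun w => ∑' n, c n * w ^ n) (∑' n, c n * (n * z ^ (n - 1))) z := by
  obtain ⟨r, hzr, hr⟩ := exists_between hz
  have hr₀ : 0 < r := (norm_nonneg z).trans_lt hzr
  have hu : Summable fun n : ℕ => r⁻¹ * ((n : ℝ) ^ (k + 1) * r ^ n) := by
    refine Summable.mul_left _ (.of_norm ?_)
    exact summable_norm_pow_mul_geometric_of_norm_lt_one (k + 1)
      (by rwa [Real.norm_of_nonneg hr₀.le])
  refine hasDerivAt_tsum_of_isPreconnected hu Metric.isOpen_ball
    (convex_ball (0 : ℂ) r).isPreconnected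
    (fun n w _ => (hasDerivAt_pow n w).const_mul (c n)) (fun n w hw => ?_)
    (Metric.mem_ball_self hr₀)
    (summable_norm_mul_pow hc (by simp)).of_norm (by simpa using hzr)
  rcases n with - | n
  · simp
  have hw' : ‖w‖ ≤ r := by simpa using (Metric.mem_ball.1 hw).le
  have h : r⁻¹ * (((n + 1 : ℕ) : ℝ) ^ (k + 1) * r ^ (n + 1)) =
      ((n + 1 : ℕ) : ℝ) ^ k * ((n + 1 : ℕ) * r ^ n) := by
    field_simp
    ring
  rw [h]
  simp only [norm_mul, norm_pow, Complex.norm_natCast, Nat.add_sub_cancel]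
  gcongr
  exact hc _

lemma mul_deriv_tsum_mul_pow (hc : ∀ n, ‖c n‖ ≤ (n : ℝ) ^ k) {z : ℂ} (hz : ‖z‖ < 1) :
    z * deriv (fun w => ∑' n, c n * w ^ n) z = ∑' n, n * c n * z ^ n := by
  rw [(hasDerivAt_tsum_mul_pow hc hz).deriv, ← tsum_mul_left]
  refine tsum_congr fun n => ?_
  rcases n with - | n
  · simp
  · rw [Nat.add_sub_cancel, pow_succ]
    ring

end PowerSeries

lemma norm_sum_divisors_le {f : ℕ → ℂ} {k : ℕ} (hf : ∀ n, ‖f n‖ ≤ (n : ℝ) ^ k) (n : ℕ) :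
    ‖∑ d ∈ n.divisors, f d‖ ≤ (n : ℝ) ^ (k + 1) := by
  calc ‖∑ d ∈ n.divisors, f d‖ ≤ ∑ d ∈ n.divisors, (n : ℝ) ^ k := by
        refine norm_sum_le_of_le _ fun d hd => (hf d).trans ?_
        gcongr
        exact Nat.divisor_le hd
    _ = n.divisors.card * (n : ℝ) ^ k := by simp
    _ ≤ n * (n : ℝ) ^ k := by
        gcongr
        exact Nat.card_divisors_le_self n
    _ = (n : ℝ) ^ (k + 1) := by ring

lemma one_sub_pow_ne_zero {z : ℂ} (hz : ‖z‖ < 1) {m : ℕ} (hm : m ≠ 0) : 1 - z ^ m ≠ 0 := by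
  intro h
  have h₁ : ‖z ^ m‖ < 1 := by
    rw [norm_pow]
    exact pow_lt_one₀ (norm_nonneg z) hz hm
  rw [← sub_eq_zero.1 h] at h₁
  simp at h₁

section Lambert

variable {f : ℕ → ℂ} {k : ℕ}

lemma summable_lambert (hf : ∀ n, ‖f n‖ ≤ (n : ℝ) ^ k) {z : ℂ} (hz : ‖z‖ < 1) :
    Summable fun n => f n * z ^ n / (1 - z ^ n) := by
  refine .of_norm_bounded (summable_norm_pow_mul_geometric_div_one_sub k hz).norm fun n => ?_
  simp only [norm_mul, norm_div, norm_pow, Complex.norm_natCast]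
  gcongr
  exact hf n

/-- The power series expansion of a Lambert series. -/
lemma tsum_lambert (hf : ∀ n, ‖f n‖ ≤ (n : ℝ) ^ k) (hf₀ : f 0 = 0) {z : ℂ} (hz : ‖z‖ < 1) :
    ∑' n, f n * z ^ n / (1 - z ^ n) = ∑' n, (∑ d ∈ n.divisors, f d) * z ^ n := by
  have hprod : Summable fun p : ℕ+ × ℕ+ => f p.1 * z ^ (p.1 * p.2 : ℕ) := by
    refine .of_norm_bounded (summable_prod_mul_pow k hz).prod_symm.norm fun p => ?_
    simp only [norm_mul, norm_pow, Complex.norm_natCast, Prod.fst_swap, Prod.snd_swap,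
      mul_comm (p.2 : ℕ)]
    gcongr
    exact hf _
  have hgeom (m : ℕ+) : ∑' j : ℕ+, f m * z ^ (m * j : ℕ) = f m * z ^ (m : ℕ) / (1 - z ^ (m : ℕ)) := by
    have hm : ‖z ^ (m : ℕ)‖ < 1 := by
      rw [norm_pow]
      exact pow_lt_one₀ (norm_nonneg z) hz m.ne_zero
    rw [tsum_pnat_eq_tsum_succ (f := fun j => f m * z ^ (m * j : ℕ)), mul_div_assoc,
      div_eq_mul_inv, ← tsum_geometric_of_norm_lt_one hm, ← tsum_mul_left, ← tsum_mul_left]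
    exact tsum_congr fun j => by rw [← pow_mul, ← pow_add]; ring_nf
  rw [← tsum_zero_pnat_eq_tsum_nat (summable_lambert hf hz),
    ← tsum_zero_pnat_eq_tsum_nat (summable_norm_mul_pow (norm_sum_divisors_le hf) hz).of_norm]
  simp only [hf₀, zero_mul, zero_div, Nat.divisors_zero, Finset.sum_empty, zero_add, ← hgeom]
  have hs := sigmaAntidiagonalEquivProd.summable_iff.2 hprod
  simp only [Function.comp_def] at hs
  rw [← hprod.tsum_prod, ← sigmaAntidiagonalEquivProd.tsum_eq, hs.tsum_sigma]
  refine tsum_congr fun n => ?_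
  simp only [tsum_fintype, Finset.univ_eq_attach, sigmaAntidiagonalEquivProd, Equiv.coe_fn_mk,
    divisorsAntidiagonalFactors, PNat.mk_coe]
  rw [(n : ℕ).divisorsAntidiagonal.sum_attach fun x : ℕ × ℕ => f x.1 * z ^ (x.1 * x.2),
    Nat.sum_divisorsAntidiagonal fun x y => f x * z ^ (x * y), Finset.sum_mul]
  exact Finset.sum_congr rfl fun d hd => by
    rw [Nat.mul_div_cancel' (Nat.dvd_of_mem_divisors hd)]

end Lambert

section Product

variable {e : ℕ → ℕ}

lemma summable_norm_neg_pow (he : e.Injective) {z : ℂ} (hz : ‖z‖ < 1) :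
    Summable fun n => ‖-z ^ e n‖ := by
  simpa [Function.comp_def] using
    (summable_geometric_of_lt_one (norm_nonneg z) hz).comp_injective he

lemma multipliable_one_sub_pow (he : e.Injective) {z : ℂ} (hz : ‖z‖ < 1) :
    Multipliable fun n => 1 - z ^ e n := by
  simpa [sub_eq_add_neg] using multipliable_one_add_of_summable (summable_norm_neg_pow he hz)

lemma tprod_one_sub_pow_ne_zero (he : e.Injective) (he₀ : ∀ n, e n ≠ 0) {z : ℂ} (hz : ‖z‖ < 1) :
    ∏' n, (1 - z ^ e n) ≠ 0 := by
  simp only [sub_eq_add_neg]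
  refine tprod_one_add_ne_zero_of_summable (fun n => ?_) (summable_norm_neg_pow he hz)
  rw [← sub_eq_add_neg]
  exact one_sub_pow_ne_zero hz (he₀ n)

lemma multipliableLocallyUniformlyOn_one_sub_pow (he : e.Injective) :
    MultipliableLocallyUniformlyOn (fun n (z : ℂ) => 1 - z ^ e n) (Metric.ball 0 1) := by
  use fun z => ∏' n, (1 - z ^ e n)
  simp_rw [sub_eq_add_neg]
  apply hasProdLocallyUniformlyOn_of_forall_compact Metric.isOpen_ball
  intro K hK hcK
  rcases K.eq_empty_or_nonempty with hN | hN
  · simpa [hasProdUniformlyOn_iff_tendstoUniformlyOn, hN] using tendstoUniformlyOn_empty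
  · obtain ⟨z₀, hz₀, hmax⟩ := hcK.exists_isMaxOn hN
      (show ContinuousOn (fun z : ℂ => ‖z‖) K by fun_prop)
    refine (summable_norm_neg_pow he (by simpa using hK hz₀)).hasProdUniformlyOn_nat_one_add
      hcK (.of_forall fun n z hz => ?_) (fun _ => by fun_prop)
    simpa using pow_le_pow_left₀ (norm_nonneg _) (hmax hz) (e n)

lemma differentiableAt_tprod_one_sub_pow (he : e.Injective) {z : ℂ} (hz : ‖z‖ < 1) :
    DifferentiableAt ℂ (fun w => ∏' n, (1 - w ^ e n)) z := by
  have h : DifferentiableOn ℂ (fun w : ℂ => ∏' n, (1 - w ^ e n)) (Metric.ball 0 1) :=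
    (multipliableLocallyUniformlyOn_one_sub_pow he).hasProdLocallyUniformlyOn.differentiableOn
      (.of_forall fun _ => by simpa [Finset.prod_fn] using
        DifferentiableOn.finsetProd (fun _ _ => by fun_prop)) Metric.isOpen_ball
  exact h.differentiableAt (Metric.isOpen_ball.mem_nhds (by simpa using hz))

lemma logDeriv_one_sub_pow (m : ℕ) (z : ℂ) :
    logDeriv (fun w : ℂ => 1 - w ^ m) z = -(m * z ^ (m - 1)) / (1 - z ^ m) := by
  simp [logDeriv_apply]

lemma mul_logDeriv_one_sub_pow (m : ℕ) (z : ℂ) :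
    z * logDeriv (fun w : ℂ => 1 - w ^ m) z = -(m * z ^ m / (1 - z ^ m)) := by
  rw [logDeriv_one_sub_pow]
  rcases m with - | m
  · simp
  · rw [Nat.add_sub_cancel, pow_succ]
    ring

lemma summable_lambert_comp (he : e.Injective) {z : ℂ} (hz : ‖z‖ < 1) :
    Summable fun n => e n * z ^ e n / (1 - z ^ e n) :=
  (summable_lambert (f := fun n => (n : ℂ)) (k := 1) (by simp) hz).comp_injective he

lemma mul_logDeriv_tprod (he : e.Injective) (he₀ : ∀ n, e n ≠ 0) {z : ℂ} (hz : ‖z‖ < 1) :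
    z * logDeriv (fun w => ∏' n, (1 - w ^ e n)) z = -∑' n, e n * z ^ e n / (1 - z ^ e n) := by
  rcases eq_or_ne z 0 with rfl | hz₀
  · simp [he₀]
  have hsum : Summable fun n => logDeriv (fun w : ℂ => 1 - w ^ e n) z := by
    rw [← summable_mul_left_iff hz₀]
    simp only [mul_logDeriv_one_sub_pow]
    exact (summable_lambert_comp he hz).neg
  have hlog := logDeriv_tprod_eq_tsum (f := fun n (w : ℂ) => 1 - w ^ e n)
    (s := Metric.ball (0 : ℂ) 1) (x := z) Metric.isOpen_ball (by simpa using hz)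
    (fun n => one_sub_pow_ne_zero hz (he₀ n)) (fun n => by fun_prop) hsum
    (multipliableLocallyUniformlyOn_one_sub_pow he) (tprod_one_sub_pow_ne_zero he he₀ hz)
  rw [hlog, ← tsum_mul_left, ← tsum_neg]
  exact tsum_congr fun n => mul_logDeriv_one_sub_pow _ _

end Product

/-- The power series `∑ logCoeff n * q ^ n`, the logarithmic derivative of the product. -/
noncomputable def logSeries (q : ℂ) : ℂ := ∑' n, (logCoeff n : ℂ) * q ^ n

/-- The Rogers-Ramanujan product `∏ 1 / ((1 - q ^ (5 n + 2)) (1 - q ^ (5 n + 3)))`. -/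
noncomputable def product (q : ℂ) : ℂ :=
  ∏' n : ℕ, ((1 - q ^ (5 * n + 2)) * (1 - q ^ (5 * n + 3)))⁻¹

lemma norm_chi_mul_le (n : ℕ) : ‖((chi n * n : ℤ) : ℂ)‖ ≤ (n : ℝ) ^ 1 := by
  rw [chi]
  split_ifs <;> simp

lemma norm_logCoeff_le (n : ℕ) : ‖(logCoeff n : ℂ)‖ ≤ (n : ℝ) ^ 2 := by
  rw [logCoeff, Int.cast_sum]
  exact norm_sum_divisors_le norm_chi_mul_le n

lemma norm_divisorSum_le (k n : ℕ) : ‖(divisorSum k n : ℂ)‖ ≤ (n : ℝ) ^ (k + 1) := by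
  rw [divisorSum, Int.cast_sum]
  exact norm_sum_divisors_le (f := fun d => ((d ^ k : ℤ) : ℂ)) (by simp) n

lemma tsum_lambert_comp_add (z : ℂ) (hz : ‖z‖ < 1) :
    ∑' n : ℕ, ((5 * n + 2 : ℕ) : ℂ) * z ^ (5 * n + 2) / (1 - z ^ (5 * n + 2))
      + ∑' n : ℕ, ((5 * n + 3 : ℕ) : ℂ) * z ^ (5 * n + 3) / (1 - z ^ (5 * n + 3)) =
      logSeries z := by
  have hclass (r : ℕ) (hr : r < 5) :
      ∑' n : ℕ, ((5 * n + r : ℕ) : ℂ) * z ^ (5 * n + r) / (1 - z ^ (5 * n + r)) =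
        ∑' m : ℕ, (if m % 5 = r then (m : ℂ) else 0) * z ^ m / (1 - z ^ m) := by
    have hinj : Function.Injective fun n : ℕ => 5 * n + r := fun a b h => by
      simp only at h
      omega
    rw [← hinj.tsum_eq (f := fun m : ℕ => (if m % 5 = r then (m : ℂ) else 0) * z ^ m / (1 - z ^ m))]
    · refine tsum_congr fun n => ?_
      rw [if_pos (by omega)]
    · intro m hm
      by_cases h : m % 5 = r
      · exact ⟨m / 5, by simp only; omega⟩
      · simp [h] at hm
  have hsum (r : ℕ) : Summable fun m : ℕ =>
      (if m % 5 = r then (m : ℂ) else 0) * z ^ m / (1 - z ^ m) :=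
    summable_lambert (k := 1) (fun m => by split_ifs <;> simp) hz
  rw [hclass 2 (by norm_num), hclass 3 (by norm_num), ← (hsum 2).tsum_add (hsum 3), logSeries]
  simp only [logCoeff, Int.cast_sum]
  rw [← tsum_lambert norm_chi_mul_le (by simp) hz]
  refine tsum_congr fun m => ?_
  rw [← add_div, ← add_mul]
  congr 2
  have hm : (m : ZMod 5) = ((m % 5 : ℕ) : ZMod 5) := (ZMod.natCast_mod m 5).symm
  have h₅ : m % 5 < 5 := Nat.mod_lt _ (by norm_num)
  rw [chi, hm]
  generalize m % 5 = r at h₅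
  interval_cases r <;> simp +decide

lemma mul_deriv_product {q : ℂ} (hq : ‖q‖ < 1) :
    DifferentiableAt ℂ product q ∧ q * deriv product q = logSeries q * product q := by
  have hinj (r : ℕ) : Function.Injective fun n : ℕ => 5 * n + r := fun a b h => by
    simp only at h
    omega
  have heq {z : ℂ} (hz : ‖z‖ < 1) : product z =
      ((∏' n : ℕ, (1 - z ^ (5 * n + 2))) * ∏' n : ℕ, (1 - z ^ (5 * n + 3)))⁻¹ := by
    have h₂ := multipliable_one_sub_pow (hinj 2) hz
    have h₃ := multipliable_one_sub_pow (hinj 3) hz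
    rw [product, ← h₂.tprod_mul h₃]
    refine (h₂.mul h₃).tprod_inv₀ ?_
    rw [h₂.tprod_mul h₃]
    exact mul_ne_zero (tprod_one_sub_pow_ne_zero (hinj 2) (by simp) hz)
      (tprod_one_sub_pow_ne_zero (hinj 3) (by simp) hz)
  have hev : product =ᶠ[nhds q] fun z =>
      ((∏' n : ℕ, (1 - z ^ (5 * n + 2))) * ∏' n : ℕ, (1 - z ^ (5 * n + 3)))⁻¹ := by
    filter_upwards [Metric.isOpen_ball.mem_nhds (show q ∈ Metric.ball 0 1 by simpa using hq)]
      with z hz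
    exact heq (by simpa using hz)
  have hd₂ := differentiableAt_tprod_one_sub_pow (hinj 2) hq
  have hd₃ := differentiableAt_tprod_one_sub_pow (hinj 3) hq
  have hn₂ := tprod_one_sub_pow_ne_zero (hinj 2) (by simp) hq
  have hn₃ := tprod_one_sub_pow_ne_zero (hinj 3) (by simp) hq
  have hl₂ := mul_logDeriv_tprod (hinj 2) (by simp) hq
  have hl₃ := mul_logDeriv_tprod (hinj 3) (by simp) hq
  have hder := (hd₂.hasDerivAt.fun_mul hd₃.hasDerivAt).fun_inv (mul_ne_zero hn₂ hn₃)
  have hder' := hder.congr_of_eventuallyEq hev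
  refine ⟨hder'.differentiableAt, ?_⟩
  rw [hder'.deriv, heq hq, ← tsum_lambert_comp_add q hq, ← neg_eq_iff_eq_neg.2 hl₂,
    ← neg_eq_iff_eq_neg.2 hl₃, logDeriv_apply, logDeriv_apply]
  generalize (∏' n : ℕ, (1 - q ^ (5 * n + 2))) = P at *
  generalize (∏' n : ℕ, (1 - q ^ (5 * n + 3))) = Q at *
  field_simp
  ring

lemma logSeries_riccati {q : ℂ} (hq : ‖q‖ < 1) :
    q * deriv logSeries q + logSeries q ^ 2
      + (1 / 5 + 4 * ∑' n, (divisorSum 1 n : ℂ) * q ^ n) * logSeries q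
      + 11 / 15 * ∑' n, ((divisorSum 1 n : ℂ) - divisorSum 3 n) * q ^ n = 0 := by
  have hh := summable_norm_mul_pow norm_logCoeff_le hq
  have hs₁ := summable_norm_mul_pow (norm_divisorSum_le 1) hq
  have hs₃ := summable_norm_mul_pow (norm_divisorSum_le 3) hq
  have hn : ∀ n : ℕ, ‖n * (logCoeff n : ℂ)‖ ≤ (n : ℝ) ^ 3 := fun n => by
    rw [norm_mul, Complex.norm_natCast, pow_succ']
    gcongr
    exact norm_logCoeff_le n
  have hd := summable_norm_mul_pow hn hq
  have hsq := summable_norm_sum_mul_antidiagonal_of_summable_norm hh hh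
  have hsh := summable_norm_sum_mul_antidiagonal_of_summable_norm hs₁ hh
  have hderiv : q * deriv logSeries q = ∑' n, n * (logCoeff n : ℂ) * q ^ n :=
    mul_deriv_tsum_mul_pow norm_logCoeff_le hq
  rw [hderiv, add_mul, mul_assoc, pow_two]
  simp only [sub_mul]
  simp only [logSeries]
  rw [hs₁.of_norm.tsum_sub hs₃.of_norm]
  rw [tsum_mul_tsum_eq_tsum_sum_antidiagonal_of_summable_norm hh hh,
    tsum_mul_tsum_eq_tsum_sum_antidiagonal_of_summable_norm hs₁ hh]
  have htotal := ((((hd.of_norm.hasSum).add hsq.of_norm.hasSum).add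
    ((hh.of_norm.hasSum.mul_left (1 / 5)).add (hsh.of_norm.hasSum.mul_left 4))).add
    ((hs₁.of_norm.hasSum.sub hs₃.of_norm.hasSum).mul_left (11 / 15)))
  refine htotal.tsum_eq.symm.trans ?_
  rw [← tsum_zero (α := ℂ) (β := ℕ)]
  refine tsum_congr fun n => ?_
  have hconv (a b : ℕ → ℤ) : ∑ k ∈ Finset.HasAntidiagonal.antidiagonal n,
      (a k.1 : ℂ) * q ^ k.1 * (b k.2 * q ^ k.2) =
      ((∑ k ∈ Finset.HasAntidiagonal.antidiagonal n, a k.1 * b k.2 : ℤ) : ℂ) * q ^ n := by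
    rw [Int.cast_sum, Finset.sum_mul]
    refine Finset.sum_congr rfl fun k hk => ?_
    rw [← Finset.HasAntidiagonal.mem_antidiagonal.1 hk, pow_add]
    push_cast
    ring
  rw [hconv, hconv]
  have h := congrArg (Int.cast : ℤ → ℂ) (logCoeff_riccati n)
  push_cast at h ⊢
  linear_combination q ^ n / 15 * h

end RogersRamanujan

/-- The Rogers–Ramanujan product `L₁(q) = ∏_{n≥0} 1/((1-q^{5n+2})(1-q^{5n+3}))`
satisfies `(qd/dq)²F + (1/5 + 4∑σ₁(n)qⁿ)(qd/dq)F + (11/15)∑(σ₁(n)-σ₃(n))qⁿ · F = 0`. -/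
theorem RR_product_L1_ODE (L₁ : ℂ → ℂ)
    (hL : L₁ = fun q : ℂ => ∏' n : ℕ, ((1 - q ^ (5 * n + 2)) * (1 - q ^ (5 * n + 3)))⁻¹)
    (D : (ℂ → ℂ) → (ℂ → ℂ)) (hD : D = fun F => fun q => q * deriv F q)
    (q : ℂ) (hq : ‖q‖ < 1) :
    D (D L₁) q
      + (1 / 5 + 4 * ∑' n : ℕ, (∑ d ∈ (n + 1).divisors, (d : ℂ)) * q ^ (n + 1)) * D L₁ q
      + 11 / 15 * (∑' n : ℕ,
          ((∑ d ∈ (n + 1).divisors, (d : ℂ)) - ∑ d ∈ (n + 1).divisors, (d : ℂ) ^ 3)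
            * q ^ (n + 1)) * L₁ q = 0 := by
  open RogersRamanujan in
  have hprod : L₁ = product := hL
  subst hprod hD
  have hs₁ := (summable_norm_mul_pow (norm_divisorSum_le 1) hq).of_norm
  have hs₃ := (summable_norm_mul_pow (norm_divisorSum_le 3) hq).of_norm
  have h₁ : ∑' n : ℕ, (∑ d ∈ (n + 1).divisors, (d : ℂ)) * q ^ (n + 1) =
      ∑' n, (divisorSum 1 n : ℂ) * q ^ n := by
    rw [hs₁.tsum_eq_zero_add]
    simp [divisorSum]
  have h₂ : ∑' n : ℕ, ((∑ d ∈ (n + 1).divisors, (d : ℂ)) - ∑ d ∈ (n + 1).divisors, (d : ℂ) ^ 3)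
      * q ^ (n + 1) = ∑' n, ((divisorSum 1 n : ℂ) - divisorSum 3 n) * q ^ n := by
    have hs := hs₁.sub hs₃
    simp only [← sub_mul] at hs
    rw [hs.tsum_eq_zero_add]
    simp [divisorSum]
  have hev : (fun z => z * deriv product z) =ᶠ[nhds q] fun z => logSeries z * product z := by
    filter_upwards [Metric.isOpen_ball.mem_nhds (show q ∈ Metric.ball 0 1 by simpa using hq)]
      with z hz
    exact (mul_deriv_product (by simpa using hz)).2
  obtain ⟨hdiff, hder⟩ := mul_deriv_product hq
  have hlog : DifferentiableAt ℂ logSeries q :=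
    (hasDerivAt_tsum_mul_pow norm_logCoeff_le hq).differentiableAt
  have hric := logSeries_riccati hq
  simp only [h₁, h₂]
  rw [hev.deriv_eq, deriv_fun_mul hlog hdiff, hder]
  linear_combination product q * hric + logSeries q * hder
end
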